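/- Let d ∈ ℕ and let (X_i)_{i∈ℕ} be a strictly stationary sequence of S_d-valued random vectors with marginal density f on S_d satisfying (A2) (for some p ∈ (2,∞), sup_{i≠j} ‖h_{i,j}‖_p < ∞, where h_{i,j} = f_{X_i,X_j} − f_{X_i} f_{X_j}), (A3) (α(m) ≪ m^{−ν} for some ν > max{2(p−1)/(p−2), (d+4)/2}), (A4) f Lipschitz continuous, and (A5) b = b(n) → 0, n b^{d/2} → ∞, n^{1/2} b^{d/4+1/2} → 0. Fix s ∈ Int(S_d). Let (p_n), (q_n) be positive integer sequences diverging to ∞ with k_n = ⌊n/(p_n+q_n)⌋ → ∞ such that: (a) k_n q_n/n → 0; (b) p_n/(p_n+q_n) → 1; (c) k_n q_n² n^{−1} b^{−d/2}/(p_n+q_n)^ν → 0; (d) k_n/q_n^ν → 0; (e) p_n/(n^{1/2} b^{d/4}) → 0. Set Ξ_{i,n}(s) = κ_{s,b}(X_i) − E{κ_{s,b}(X_i)} and S_{1,n}(s) = Σ_{j=1}^{k_n} U_j(s), where U_j(s) = Σ_{i ∈ I_j} Ξ_{i,n}(s) and I_j = {(j−1)(p_n+q_n)+1, …, (j−1)(p_n+q_n)+p_n}.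 Then n^{−1/2} b^{d/4} S_{1,n}(s) converges in distribution to N(0, ψ(s) f(s)) as n → ∞. -/

import Mathlib

open MeasureTheory Filter Asymptotics Real Topology

noncomputable section

/-- The `d`-dimensional simplex `S_d = {s ∈ [0,1]^d : ‖s‖₁ ≤ 1}`. -/
def Sd (d : ℕ) : Set (Fin d → ℝ) :=
  {s | (∀ i, s i ∈ Set.Icc (0 : ℝ) 1) ∧ ∑ i, |s i| ≤ 1}

/-- The interior of the simplex, `Int(S_d) = {s ∈ (0,1)^d : ‖s‖₁ < 1}`. -/
def SdInt (d : ℕ) : Set (Fin d → ℝ) :=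
  {s | (∀ i, s i ∈ Set.Ioo (0 : ℝ) 1) ∧ ∑ i, |s i| < 1}

/-- The Dirichlet(u, v) density on the simplex, evaluated at `x`. -/
def dirK (d : ℕ) (u : Fin d → ℝ) (v : ℝ) (x : Fin d → ℝ) : ℝ :=
  (Real.Gamma (∑ i, u i + v) / (Real.Gamma v * ∏ i, Real.Gamma (u i))) *
    (1 - ∑ i, x i) ^ (v - 1) * ∏ i, (x i) ^ (u i - 1)

/-- The Dirichlet kernel `κ_{s,b} = K_{s/b+1, (1-‖s‖₁)/b+1}`. -/
def kappa (d : ℕ) (s : Fin d → ℝ) (b : ℝ) (x : Fin d → ℝ) : ℝ :=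
  dirK d (fun i => s i / b + 1) ((1 - ∑ i, s i) / b + 1) x

/-- `ψ(s) = (4π)^{-d/2} / ((1-‖s‖₁)^{1/2} ∏ s_i^{1/2})`. -/
def psiFun (d : ℕ) (s : Fin d → ℝ) : ℝ :=
  (4 * π) ^ (-(d : ℝ) / 2) /
    ((1 - ∑ i, s i) ^ ((1 : ℝ) / 2) * ∏ i, (s i) ^ ((1 : ℝ) / 2))

/-- The Dirichlet kernel density estimator `f̂_{n,b}(s)`. -/
def fhat {Ω : Type*} (d n : ℕ) (b : ℝ) (X : ℕ → Ω → (Fin d → ℝ))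
    (s : Fin d → ℝ) (ω : Ω) : ℝ :=
  (n : ℝ)⁻¹ * ∑ i ∈ Finset.Icc 1 n, kappa d s b (X i ω)

/-- The strong mixing (α-mixing) coefficient of the sequence `X`. -/
def alphaMix {Ω : Type*} [MeasurableSpace Ω] (P : Measure Ω)
    {d : ℕ} (X : ℕ → Ω → (Fin d → ℝ)) (m : ℕ) : ℝ :=
  sSup {r : ℝ | ∃ k : ℕ, 1 ≤ k ∧ ∃ A B : Set Ω,
    MeasurableSet[⨆ i ∈ Set.Icc 1 k, MeasurableSpace.comap (X i) inferInstance] A ∧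
    MeasurableSet[⨆ i ∈ Set.Ici (k + m), MeasurableSpace.comap (X i) inferInstance] B ∧
    r = |(P (A ∩ B)).toReal - (P A).toReal * (P B).toReal|}

/-- Strict stationarity of the sequence `X` (indexed from 1). -/
def IsStrictlyStationary {Ω : Type*} [MeasurableSpace Ω] (P : Measure Ω)
    {d : ℕ} (X : ℕ → Ω → (Fin d → ℝ)) : Prop :=
  ∀ k n : ℕ,
    Measure.map (fun ω => fun t : Fin n => X (t.1 + 1 + k) ω) P =
      Measure.map (fun ω => fun t : Fin n => X (t.1 + 1) ω) P

/-- Covariance of two real random variables. -/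
def cov {Ω : Type*} [MeasurableSpace Ω] (P : Measure Ω) (Y Z : Ω → ℝ) : ℝ :=
  ∫ ω, Y ω * Z ω ∂P - (∫ ω, Y ω ∂P) * (∫ ω, Z ω ∂P)

/-- The bias functional `g(s)` from Theorem MSE. -/
def gfun (d : ℕ) (f : (Fin d → ℝ) → ℝ) (s : Fin d → ℝ) : ℝ :=
  (∑ i, (1 - ((d : ℝ) + 1) * s i) * fderiv ℝ f s (Pi.single i 1)) +
    (1 / 2) * ∑ i, ∑ j, s i * ((if i = j then (1 : ℝ) else 0) - s j) *
      fderiv ℝ (fun t => fderiv ℝ f t (Pi.single i 1)) s (Pi.single j 1)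

/-- The centered kernel variable `Ξ_{i,n}(s)`. -/
def Xi {Ω : Type*} [MeasurableSpace Ω] (P : Measure Ω) {d : ℕ}
    (X : ℕ → Ω → (Fin d → ℝ)) (s : Fin d → ℝ) (b : ℝ) (i : ℕ) (ω : Ω) : ℝ :=
  kappa d s b (X i ω) - ∫ ω', kappa d s b (X i ω') ∂P

/-- The `j`-th big block of indices `I_j`. -/
def bigBlock (pn qn j : ℕ) : Finset ℕ :=
  Finset.Icc ((j - 1) * (pn + qn) + 1) ((j - 1) * (pn + qn) + pn)

/-- The `j`-th small block of indices `J_j`. -/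
def smallBlock (pn qn j : ℕ) : Finset ℕ :=
  Finset.Icc ((j - 1) * (pn + qn) + pn + 1) (j * (pn + qn))

/-- Assumption (A2): pairwise joint densities exist and the local dependence
functions `h_{i,j} = f_{X_i,X_j} - f_{X_i} f_{X_j}` have uniformly bounded `L^p` norms. -/
def AssumpA2 {Ω : Type*} [MeasurableSpace Ω] (P : Measure Ω) {d : ℕ}
    (X : ℕ → Ω → (Fin d → ℝ)) (f : (Fin d → ℝ) → ℝ) (p : ℝ) : Prop :=
  ∃ fpair : ℕ → ℕ → ((Fin d → ℝ) × (Fin d → ℝ)) → ℝ,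
    (∀ i j : ℕ, 1 ≤ i → 1 ≤ j → i ≠ j →
      Measure.map (fun ω => (X i ω, X j ω)) P =
        volume.withDensity (fun z => ENNReal.ofReal (fpair i j z))) ∧
    (∀ i j : ℕ, 1 ≤ i → 1 ≤ j → i ≠ j →
      Integrable (fun z => |fpair i j z - f z.1 * f z.2| ^ p)
        (volume.restrict (Sd d ×ˢ Sd d))) ∧
    ∃ C : ℝ, ∀ i j : ℕ, 1 ≤ i → 1 ≤ j → i ≠ j →
      (∫ z in Sd d ×ˢ Sd d, |fpair i j z - f z.1 * f z.2| ^ p) ^ (1 / p) ≤ C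

/-- Stirling ratio `R(z) = √(2π) e^{-z} z^{z+1/2} / Γ(z+1)`. -/
def Rfun (z : ℝ) : ℝ :=
  Real.sqrt (2 * π) * Real.exp (-z) * z ^ (z + 1 / 2) / Real.Gamma (z + 1)

end

/-!
By stationarity the big blocks `U_j` have a common law, and the gaps of length `q_n` make them
nearly independent: a covariance bound for strong mixing, applied block by block, shows that the
characteristic function of their sum differs from the `k_n`-th power of that of one block by at
most `8 k_n α(q_n + 1)`. Condition (e) makes the normalized blocks uniformly small, so a
second-order expansion gives the Gaussian limit once `n⁻¹ b^{d/2} k_n Var(U_1)` converges.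

The diagonal part of `Var(U_1)` is governed by `∫ κ_{s,b}² f`. The square of a Dirichlet density is
a constant times the Dirichlet density with half the bandwidth, which concentrates at `s`, so
Stirling's formula gives `b^{d/2} ∫ κ_{s,b}² f → ψ(s) f(s)`. The off-diagonal covariances are
negligible by interpolation between the `L^p` bound on the local dependence functions and the
mixing bound.
-/

section Stirling

theorem Gamma_add_le_rpow_mul_Gamma {x θ : ℝ} (hx : 0 < x) (h0 : 0 ≤ θ) (h1 : θ ≤ 1) :
    Gamma (x + θ) ≤ x ^ θ * Gamma x := by
  rcases h0.eq_or_lt with rfl | h0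
  · simp
  rcases h1.eq_or_lt with rfl | h1
  · rw [Gamma_add_one hx.ne', rpow_one]
  have h := Gamma_mul_add_mul_le_rpow_Gamma_mul_rpow_Gamma hx (by linarith : 0 < x + 1)
    (sub_pos.2 h1) h0 (by ring)
  have hΓ := Gamma_pos_of_pos hx
  calc Gamma (x + θ) = Gamma ((1 - θ) * x + θ * (x + 1)) := by ring_nf
    _ ≤ Gamma x ^ (1 - θ) * (x * Gamma x) ^ θ := by rwa [← Gamma_add_one hx.ne']
    _ = x ^ θ * (Gamma x ^ (1 - θ) * Gamma x ^ θ) := by rw [mul_rpow hx.le hΓ.le]; ring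
    _ = x ^ θ * Gamma x := by rw [← rpow_add hΓ, sub_add_cancel, rpow_one]

theorem Gamma_add_one_add_natCast {x : ℝ} (hx : 0 ≤ x) (m : ℕ) :
    Gamma (x + 1 + m) = Gamma (x + 1) * ∏ k ∈ Finset.range m, (x + 1 + k) := by
  induction m with
  | zero => simp
  | succ m ih =>
    rw [Nat.cast_succ, ← add_assoc, Gamma_add_one (by positivity), ih, Finset.prod_range_succ]
    ring

theorem Rfun_pos {z : ℝ} (hz : 0 < z) : 0 < Rfun z := by
  have := Gamma_pos_of_pos (by linarith : 0 < z + 1)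
  unfold Rfun
  positivity

theorem Gamma_add_one_eq_div_Rfun {z : ℝ} (hz : 0 < z) :
    Gamma (z + 1) = √(2 * π) * exp (-z) * z ^ (z + 1 / 2) / Rfun z := by
  have := Gamma_pos_of_pos (by linarith : 0 < z + 1)
  unfold Rfun
  field_simp

theorem Rfun_natCast {n : ℕ} (hn : n ≠ 0) : Rfun n = √π / Stirling.stirlingSeq n := by
  have hn' : (0 : ℝ) < n := by positivity
  rw [Rfun, Gamma_nat_eq_factorial, Stirling.stirlingSeq, rpow_add hn', rpow_natCast,
    ← sqrt_eq_rpow, sqrt_mul zero_le_two, sqrt_mul zero_le_two, div_pow, exp_neg, ← exp_nat_mul,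
    mul_one]
  field_simp

theorem tendsto_Rfun_natCast : Tendsto (fun n : ℕ => Rfun n) atTop (𝓝 1) := by
  have hπ : √π ≠ 0 := by positivity
  have h := (tendsto_const_nhds (x := √π)).div Stirling.tendsto_stirlingSeq_sqrt_pi hπ
  rw [div_self hπ] at h
  refine h.congr' ?_
  filter_upwards [eventually_ne_atTop 0] with n hn using (Rfun_natCast hn).symm

variable {x : ℝ} {n : ℕ}

/- Log-convexity of `Γ` gives `n! x ^ θ ≤ Γ (x + 1) ≤ n! (n + 1) ^ θ` for `θ = x - n ∈ [0, 1]`; the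
two bounds below transfer Stirling's formula from `n` to `x`. -/

theorem Rfun_le_exp_mul_Rfun_natCast (hn : 0 < n) (hnx : n ≤ x) (hxn : x ≤ n + 1) :
    Rfun x ≤ exp (1 / (2 * n)) * Rfun n := by
  have hn' : (0 : ℝ) < n := by positivity
  have hx : 0 < x := hn'.trans_le hnx
  have hΓ : n.factorial * x ^ (x - n) ≤ Gamma (x + 1) := by
    have h := Gamma_add_le_rpow_mul_Gamma hx (by linarith : 0 ≤ n + 1 - x) (by linarith)
    rw [add_sub_cancel, Gamma_nat_eq_factorial] at h
    calc n.factorial * x ^ (x - n) ≤ x ^ (n + 1 - x) * Gamma x * x ^ (x - n) := by gcongr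
      _ = x ^ (n + 1 - x + (x - n)) * Gamma x := by rw [rpow_add hx]; ring
      _ = Gamma (x + 1) := by rw [Gamma_add_one hx.ne']; simp
  have hpow : (x / n) ^ (n + 1 / 2 : ℝ) ≤ exp (x - n + 1 / (2 * n)) := by
    have hle : x / n ≤ exp ((x - n) / n) := by
      convert add_one_le_exp ((x - n) / n) using 1
      field_simp
      ring
    calc (x / n) ^ (n + 1 / 2 : ℝ) ≤ exp ((x - n) / n) ^ (n + 1 / 2 : ℝ) := by gcongr
      _ = exp ((x - n) / n * (n + 1 / 2)) := (exp_mul _ _).symm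
      _ ≤ exp (x - n + 1 / (2 * n)) := by
        gcongr
        rw [div_mul_eq_mul_div, div_le_iff₀ hn']
        field_simp
        nlinarith
  calc Rfun x ≤ √(2 * π) * exp (-x) * x ^ (x + 1 / 2) / (n.factorial * x ^ (x - n)) := by
        unfold Rfun
        gcongr
    _ = √(2 * π) * exp (-x) * n ^ (n + 1 / 2 : ℝ) / n.factorial * (x / n) ^ (n + 1 / 2 : ℝ) := by
        rw [div_rpow hx.le hn'.le, show x + 1 / 2 = (n + 1 / 2) + (x - n) by ring, rpow_add hx]
        field_simp
    _ ≤ √(2 * π) * exp (-x) * n ^ (n + 1 / 2 : ℝ) / n.factorial * exp (x - n + 1 / (2 * n)) := by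
        gcongr
    _ = exp (1 / (2 * n)) * Rfun n := by
        rw [Rfun, Gamma_nat_eq_factorial, exp_add, exp_sub, exp_neg, exp_neg]
        field_simp

theorem exp_mul_Rfun_natCast_le_Rfun (hn : 0 < n) (hnx : n ≤ x) (hxn : x ≤ n + 1) :
    exp (-(1 / n)) * (n / (n + 1)) * Rfun n ≤ Rfun x := by
  have hn' : (0 : ℝ) < n := by positivity
  have hx : 0 < x := hn'.trans_le hnx
  have hΓ : Gamma (x + 1) ≤ (n + 1) ^ (x - n) * n.factorial := by
    have h := Gamma_add_le_rpow_mul_Gamma (by positivity : (0 : ℝ) < n + 1)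
      (sub_nonneg.2 hnx) (by linarith)
    rwa [Gamma_nat_eq_factorial, show (n : ℝ) + 1 + (x - n) = x + 1 by ring] at h
  have hpow : exp (x - n - 1 / n) ≤ (x / n) ^ (n + 1 / 2 : ℝ) := by
    have hle : exp ((x - n) / x) ≤ x / n := by
      have h := one_sub_le_exp_neg ((x - n) / x)
      rw [exp_neg, one_sub_div hx.ne', sub_sub_cancel] at h
      exact (le_inv_comm₀ (by positivity) (exp_pos _)).1 h |>.trans_eq (inv_div _ _)
    calc exp (x - n - 1 / n) ≤ exp ((x - n) / x * n) := by
          gcongr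
          have : (x - n) * (x - n) / x ≤ 1 * 1 / n := by gcongr <;> linarith
          have e : (x - n) / x * n = x - n - (x - n) * (x - n) / x := by field_simp; ring
          linarith
      _ = exp ((x - n) / x) ^ (n : ℝ) := exp_mul _ _
      _ ≤ (x / n) ^ (n : ℝ) := by gcongr
      _ ≤ (x / n) ^ (n + 1 / 2 : ℝ) :=
        rpow_le_rpow_of_exponent_le ((one_le_div hn').2 hnx) (by linarith)
  have hratio : n / (n + 1) ≤ (x / (n + 1)) ^ (x - n) :=
    calc n / (n + 1) ≤ x / (n + 1) := by gcongr
      _ ≤ (x / (n + 1)) ^ (x - n) := by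
        simpa using rpow_le_rpow_of_exponent_ge (by positivity : 0 < x / (n + 1))
          ((div_le_one (by positivity)).2 hxn) (by linarith : x - n ≤ 1)
  calc exp (-(1 / n)) * (n / (n + 1)) * Rfun n
      = √(2 * π) * exp (-x) * n ^ (n + 1 / 2 : ℝ) / n.factorial *
          (exp (x - n - 1 / n) * (n / (n + 1))) := by
        rw [Rfun, Gamma_nat_eq_factorial, exp_sub, exp_sub, exp_neg, exp_neg, exp_neg]
        field_simp
    _ ≤ √(2 * π) * exp (-x) * n ^ (n + 1 / 2 : ℝ) / n.factorial *
          ((x / n) ^ (n + 1 / 2 : ℝ) * (x / (n + 1)) ^ (x - n)) := by gcongr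
    _ = √(2 * π) * exp (-x) * x ^ (x + 1 / 2) / ((n + 1) ^ (x - n) * n.factorial) := by
        rw [div_rpow hx.le hn'.le, div_rpow hx.le (by positivity),
          show x + 1 / 2 = (n + 1 / 2) + (x - n) by ring, rpow_add hx (n + 1 / 2)]
        field_simp
    _ ≤ Rfun x := by
        have := Gamma_pos_of_pos (by linarith : 0 < x + 1)
        unfold Rfun
        gcongr

theorem tendsto_Rfun : Tendsto Rfun atTop (𝓝 1) := by
  have hlow : Tendsto (fun n : ℕ => exp (-(1 / n)) * (n / (n + 1)) * Rfun n) atTop (𝓝 1) := by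
    have h1 : Tendsto (fun n : ℕ => exp (-(1 / (n : ℝ)))) atTop (𝓝 1) := by
      simpa [Function.comp_def] using
        (continuous_exp.tendsto _).comp (tendsto_one_div_atTop_nhds_zero_nat (𝕜 := ℝ)).neg
    simpa using (h1.mul (tendsto_natCast_div_add_atTop (1 : ℝ))).mul tendsto_Rfun_natCast
  have hup : Tendsto (fun n : ℕ => exp (1 / (2 * n)) * Rfun n) atTop (𝓝 1) := by
    have h1 : Tendsto (fun n : ℕ => 1 / (2 * (n : ℝ))) atTop (𝓝 0) := by
      simpa [mul_comm] using (tendsto_one_div_atTop_nhds_zero_nat (𝕜 := ℝ)).mul_const 2⁻¹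
    simpa using ((continuous_exp.tendsto _).comp h1).mul tendsto_Rfun_natCast
  have hfloor : Tendsto (fun x : ℝ => ⌊x⌋₊) atTop atTop := tendsto_nat_floor_atTop
  refine tendsto_of_tendsto_of_tendsto_of_le_of_le' (hlow.comp hfloor) (hup.comp hfloor) ?_ ?_ <;>
    filter_upwards [eventually_ge_atTop 1] with x hx
  · exact exp_mul_Rfun_natCast_le_Rfun (Nat.floor_pos.2 hx) (Nat.floor_le (by linarith))
      (Nat.lt_floor_add_one x).le
  · exact Rfun_le_exp_mul_Rfun_natCast (Nat.floor_pos.2 hx) (Nat.floor_le (by linarith))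
      (Nat.lt_floor_add_one x).le

end Stirling

section DirichletIntegral

theorem lintegral_Ioo_rpow_mul_rpow_sub {a c r : ℝ} (ha : 0 < a) (hc : 0 < c) (hr : 0 < r) :
    ∫⁻ x in Set.Ioo 0 r, ENNReal.ofReal (x ^ (a - 1) * (r - x) ^ (c - 1)) =
      ENNReal.ofReal (r ^ (a + c - 1) * (Gamma a * Gamma c / Gamma (a + c))) := by
  have hB := ProbabilityTheory.beta_pos ha hc
  have hscale (y : ℝ) : (Set.Ioo 0 r).indicator
      (fun x => ENNReal.ofReal (x ^ (a - 1) * (r - x) ^ (c - 1))) (r * y) =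
      ENNReal.ofReal (r ^ (a + c - 2) * ProbabilityTheory.beta a c) *
        ProbabilityTheory.betaPDF a c y := by
    by_cases hy : 0 < y ∧ y < 1
    · have hmem : r * y ∈ Set.Ioo 0 r := ⟨mul_pos hr hy.1, by nlinarith [hy.2]⟩
      rw [Set.indicator_of_mem hmem, ProbabilityTheory.betaPDF_of_pos_lt_one hy.1 hy.2,
        ← ENNReal.ofReal_mul (by positivity), show r - r * y = r * (1 - y) by ring,
        mul_rpow hr.le hy.1.le, mul_rpow hr.le (by linarith [hy.2]),
        show a + c - 2 = (a - 1) + (c - 1) by ring, rpow_add hr]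
      field_simp
    · have hmem : r * y ∉ Set.Ioo 0 r := fun h =>
        hy ⟨pos_of_mul_pos_right h.1 hr.le, lt_of_mul_lt_mul_left (by simpa using h.2) hr.le⟩
      rw [Set.indicator_of_notMem hmem, ProbabilityTheory.betaPDF_eq, if_neg hy]
      simp
  have hmeas : Measurable ((Set.Ioo 0 r).indicator
      fun x => ENNReal.ofReal (x ^ (a - 1) * (r - x) ^ (c - 1))) :=
    Measurable.indicator (by fun_prop) measurableSet_Ioo
  have hmeas' : Measurable (ProbabilityTheory.betaPDF a c) :=
    (ProbabilityTheory.measurable_betaPDFReal a c).ennreal_ofReal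
  rw [← lintegral_indicator measurableSet_Ioo, ← smul_map_volume_mul_left hr.ne',
    lintegral_smul_measure, lintegral_map hmeas (by fun_prop), lintegral_congr hscale,
    lintegral_const_mul _ hmeas', ProbabilityTheory.lintegral_betaPDF_eq_one ha hc, mul_one,
    smul_eq_mul, ← ENNReal.ofReal_mul (abs_nonneg _), abs_of_pos hr, ← mul_assoc,
    ProbabilityTheory.beta, show a + c - 1 = 1 + (a + c - 2) by ring, rpow_add hr, rpow_one]

/-- The open simplex `{x ∈ (0,∞)^d : x₁ + ⋯ + x_d < r}` of size `r`. The size is kept variable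
because the slices of a simplex are smaller simplices. -/
def openSimplex (d : ℕ) (r : ℝ) : Set (Fin d → ℝ) := {x | (∀ i, 0 < x i) ∧ ∑ i, x i < r}

/-- The unnormalised Dirichlet(u, v) density `(r - ‖x‖₁)^(v-1) ∏ x_i^(u_i-1)` on the simplex of
size `r`. -/
noncomputable def dirichletWeight {d : ℕ} (u : Fin d → ℝ) (v r : ℝ) (x : Fin d → ℝ) : ℝ :=
  (r - ∑ i, x i) ^ (v - 1) * ∏ i, x i ^ (u i - 1)

@[fun_prop]
theorem measurable_dirichletWeight {d : ℕ} (u : Fin d → ℝ) (v r : ℝ) :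
    Measurable (dirichletWeight u v r) := by
  unfold dirichletWeight
  fun_prop

theorem measurableSet_openSimplex (d : ℕ) (r : ℝ) : MeasurableSet (openSimplex d r) := by
  have h : openSimplex d r = (⋂ i, {x | 0 < x i}) ∩ {x | ∑ i, x i < r} := by
    ext x; simp [openSimplex]
  rw [h]
  exact (MeasurableSet.iInter fun i => measurableSet_lt (by fun_prop) (by fun_prop)).inter
    (measurableSet_lt (by fun_prop) (by fun_prop))

theorem cons_mem_openSimplex_iff {d : ℕ} {r t : ℝ} {y : Fin d → ℝ} :
    (Fin.cons t y : Fin (d + 1) → ℝ) ∈ openSimplex (d + 1) r ↔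
      t ∈ Set.Ioo 0 r ∧ y ∈ openSimplex d (r - t) := by
  simp only [openSimplex, Set.mem_ofPred_eq, Fin.forall_fin_succ, Fin.cons_zero, Fin.cons_succ,
    Fin.sum_univ_succ, Set.mem_Ioo]
  constructor
  · rintro ⟨⟨ht, hy⟩, hsum⟩
    have := Finset.sum_nonneg (s := Finset.univ) fun i _ => (hy i).le
    exact ⟨⟨ht, by linarith⟩, hy, by linarith⟩
  · rintro ⟨⟨ht, -⟩, hy, hsum⟩
    exact ⟨⟨ht, hy⟩, by linarith⟩

theorem lintegral_openSimplex_succ {d : ℕ} {r : ℝ} {F : (Fin (d + 1) → ℝ) → ENNReal}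
    (hF : Measurable F) :
    ∫⁻ x in openSimplex (d + 1) r, F x =
      ∫⁻ t in Set.Ioo 0 r, ∫⁻ y in openSimplex d (r - t), F (Fin.cons t y) := by
  have hF' : Measurable ((openSimplex (d + 1) r).indicator F) :=
    hF.indicator (measurableSet_openSimplex _ _)
  let e := (MeasurableEquiv.piFinSuccAbove (fun _ : Fin (d + 1) => ℝ) 0).symm
  have he : MeasurePreserving e := (volume_preserving_piFinSuccAbove (fun _ => ℝ) 0).symm
  have hcons (t : ℝ) (y : Fin d → ℝ) : e (t, y) = Fin.cons t y := by
    simp [e, Fin.consEquiv]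
  rw [← lintegral_indicator (measurableSet_openSimplex _ _), ← he.lintegral_comp hF',
    Measure.volume_eq_prod, lintegral_prod (fun z => (openSimplex (d + 1) r).indicator F (e z))
      (hF'.comp e.measurable).aemeasurable,
    ← lintegral_indicator measurableSet_Ioo]
  refine lintegral_congr fun t => ?_
  by_cases ht : t ∈ Set.Ioo 0 r
  · rw [Set.indicator_of_mem ht, ← lintegral_indicator (measurableSet_openSimplex _ _)]
    refine lintegral_congr fun y => ?_
    rw [hcons]
    by_cases hy : y ∈ openSimplex d (r - t)
    · rw [Set.indicator_of_mem hy, Set.indicator_of_mem (cons_mem_openSimplex_iff.2 ⟨ht, hy⟩)]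
    · rw [Set.indicator_of_notMem hy,
        Set.indicator_of_notMem fun h => hy (cons_mem_openSimplex_iff.1 h).2]
  · have hzero (y : Fin d → ℝ) : (openSimplex (d + 1) r).indicator F (e (t, y)) = 0 := by
      rw [hcons, Set.indicator_of_notMem fun h => ht (cons_mem_openSimplex_iff.1 h).1]
    simp [hzero, Set.indicator_of_notMem ht]

theorem dirichletWeight_cons {d : ℕ} (u : Fin (d + 1) → ℝ) (v r t : ℝ) (y : Fin d → ℝ) :
    dirichletWeight u v r (Fin.cons t y) =
      t ^ (u 0 - 1) * dirichletWeight (Fin.tail u) v (r - t) y := by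
  simp only [dirichletWeight, Fin.sum_univ_succ, Fin.prod_univ_succ, Fin.cons_zero, Fin.cons_succ,
    Fin.tail, sub_sub]
  ring

theorem lintegral_dirichletWeight {d : ℕ} (u : Fin d → ℝ) {v r : ℝ} (hu : ∀ i, 0 < u i)
    (hv : 0 < v) (hr : 0 < r) :
    ∫⁻ x in openSimplex d r, ENNReal.ofReal (dirichletWeight u v r x) =
      ENNReal.ofReal (r ^ (∑ i, u i + v - 1) *
        ((Gamma v * ∏ i, Gamma (u i)) / Gamma (∑ i, u i + v))) := by
  induction d generalizing r with
  | zero =>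
    have huniv : openSimplex 0 r = Set.univ := by ext x; simp [openSimplex, hr]
    have hΓ := (Gamma_pos_of_pos hv).ne'
    simp [huniv, dirichletWeight, volume_pi, hΓ]
  | succ d ih =>
    set V := ∑ i, Fin.tail u i + v with hV
    have hVpos : 0 < V :=
      add_pos_of_nonneg_of_pos (Finset.sum_nonneg fun i _ => (hu i.succ).le) hv
    have hslice : ∀ t ∈ Set.Ioo 0 r,
        ∫⁻ y in openSimplex d (r - t), ENNReal.ofReal (dirichletWeight u v r (Fin.cons t y)) =
          ENNReal.ofReal (t ^ (u 0 - 1) * (r - t) ^ (V - 1)) *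
            ENNReal.ofReal ((Gamma v * ∏ i, Gamma (Fin.tail u i)) / Gamma V) := by
      intro t ht
      have h0 : 0 ≤ t ^ (u 0 - 1) := rpow_nonneg ht.1.le _
      have h1 : 0 ≤ (r - t) ^ (V - 1) := rpow_nonneg (sub_pos.2 ht.2).le _
      simp_rw [dirichletWeight_cons, ENNReal.ofReal_mul h0]
      rw [lintegral_const_mul _ (by fun_prop), ih (Fin.tail u) (fun i => hu _) (sub_pos.2 ht.2),
        ENNReal.ofReal_mul h1, mul_assoc]
    have hΓ' := Gamma_pos_of_pos (add_pos (hu 0) hVpos)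
    have hΓ0 := Gamma_pos_of_pos (hu 0)
    have hsum : ∑ i, u i + v = u 0 + V := by rw [Fin.sum_univ_succ, hV, add_assoc]; rfl
    have hprod : ∏ i, Gamma (u i) = Gamma (u 0) * ∏ i, Gamma (Fin.tail u i) :=
      Fin.prod_univ_succ _
    rw [lintegral_openSimplex_succ (by fun_prop), setLIntegral_congr_fun measurableSet_Ioo hslice,
      lintegral_mul_const _ (by fun_prop), lintegral_Ioo_rpow_mul_rpow_sub (hu 0) hVpos hr, hsum,
      hprod, ← ENNReal.ofReal_mul (by positivity)]
    congr 1
    field_simp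

end DirichletIntegral

section Simplex

variable {d : ℕ} {x : Fin d → ℝ}

theorem sum_le_one_of_mem_Sd (hx : x ∈ Sd d) : ∑ i, x i ≤ 1 := by
  simpa only [abs_of_nonneg (hx.1 _).1] using hx.2

theorem openSimplex_one_subset_Sd : openSimplex d 1 ⊆ Sd d := by
  rintro x ⟨hpos, hsum⟩
  have hle (i : Fin d) : x i ≤ ∑ j, x j :=
    Finset.single_le_sum (fun j _ => (hpos j).le) (Finset.mem_univ i)
  exact ⟨fun i => ⟨(hpos i).le, (hle i).trans hsum.le⟩,
    by simpa only [abs_of_pos (hpos _)] using hsum.le⟩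

theorem isClosed_Sd : IsClosed (Sd d) := by
  have h : Sd d = (⋂ i, {x | x i ∈ Set.Icc (0 : ℝ) 1}) ∩ {x | ∑ i, |x i| ≤ 1} := by
    ext x; simp [Sd]
  rw [h]
  exact (isClosed_iInter fun i => isClosed_Icc.preimage (continuous_apply i)).inter
    (isClosed_le (by fun_prop) continuous_const)

theorem measurableSet_Sd : MeasurableSet (Sd d) := isClosed_Sd.measurableSet

theorem isCompact_Sd : IsCompact (Sd d) :=
  (isCompact_univ_pi fun _ => isCompact_Icc).of_isClosed_subset isClosed_Sd fun _ hx i _ => hx.1 i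

theorem SdInt_subset_Sd : SdInt d ⊆ Sd d := fun _ hs =>
  ⟨fun i => ⟨(hs.1 i).1.le, (hs.1 i).2.le⟩, hs.2.le⟩

theorem sum_lt_one_of_mem_SdInt (hx : x ∈ SdInt d) : ∑ i, x i < 1 := by
  simpa only [abs_of_pos (hx.1 _).1] using hx.2

end Simplex

section DirichletDensity

variable {d : ℕ} {u : Fin d → ℝ} {v : ℝ} {x : Fin d → ℝ}

theorem dirK_eq_mul_dirichletWeight : dirK d u v x =
    Gamma (∑ i, u i + v) / (Gamma v * ∏ i, Gamma (u i)) * dirichletWeight u v 1 x :=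
  mul_assoc _ _ _

@[fun_prop]
theorem measurable_dirK : Measurable (dirK d u v) := by
  unfold dirK
  fun_prop

theorem dirK_const_pos (hu : ∀ i, 0 < u i) (hv : 0 < v) :
    0 < Gamma (∑ i, u i + v) / (Gamma v * ∏ i, Gamma (u i)) := by
  have hsum : 0 < ∑ i, u i + v :=
    add_pos_of_nonneg_of_pos (Finset.sum_nonneg fun i _ => (hu i).le) hv
  exact div_pos (Gamma_pos_of_pos hsum)
    (mul_pos (Gamma_pos_of_pos hv) (Finset.prod_pos fun i _ => Gamma_pos_of_pos (hu i)))

theorem dirK_nonneg (hu : ∀ i, 0 < u i) (hv : 0 < v) (hx : x ∈ Sd d) : 0 ≤ dirK d u v x :=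
  mul_nonneg (mul_nonneg (dirK_const_pos hu hv).le
    (rpow_nonneg (sub_nonneg.2 (sum_le_one_of_mem_Sd hx)) _))
    (Finset.prod_nonneg fun i _ => rpow_nonneg (hx.1 i).1 _)

theorem dirichletWeight_eq_zero (hu : ∀ i, u i ≠ 1) (hv : v ≠ 1) (hx : x ∈ Sd d)
    (hx' : x ∉ openSimplex d 1) : dirichletWeight u v 1 x = 0 := by
  simp only [openSimplex, Set.mem_ofPred_eq, not_and_or, not_forall, not_lt] at hx'
  rcases hx' with ⟨i, hi⟩ | hsum
  · have h0 : x i = 0 := le_antisymm hi (hx.1 i).1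
    exact mul_eq_zero_of_right _ (Finset.prod_eq_zero (Finset.mem_univ i)
      (by rw [h0, zero_rpow (sub_ne_zero.2 (hu i))]))
  · have h0 : 1 - ∑ i, x i = 0 := by linarith [sum_le_one_of_mem_Sd hx]
    exact mul_eq_zero_of_left (by rw [h0, zero_rpow (sub_ne_zero.2 hv)]) _

theorem lintegral_dirK (hu : ∀ i, 1 < u i) (hv : 1 < v) :
    ∫⁻ x in Sd d, ENNReal.ofReal (dirK d u v x) = 1 := by
  have hu0 (i : Fin d) : 0 < u i := one_pos.trans (hu i)
  have hv0 : 0 < v := one_pos.trans hv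
  have hC := dirK_const_pos hu0 hv0
  have hopen : ∫⁻ x in Sd d, ENNReal.ofReal (dirichletWeight u v 1 x) =
      ∫⁻ x in openSimplex d 1, ENNReal.ofReal (dirichletWeight u v 1 x) := by
    rw [← lintegral_indicator measurableSet_Sd,
      ← lintegral_indicator (measurableSet_openSimplex d 1)]
    refine lintegral_congr fun x => ?_
    by_cases hx : x ∈ openSimplex d 1
    · rw [Set.indicator_of_mem hx, Set.indicator_of_mem (openSimplex_one_subset_Sd hx)]
    · rw [Set.indicator_of_notMem hx, Set.indicator_apply_eq_zero]
      intro hx'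
      rw [dirichletWeight_eq_zero (fun i => (hu i).ne') hv.ne' hx' hx, ENNReal.ofReal_zero]
  simp_rw [dirK_eq_mul_dirichletWeight, ENNReal.ofReal_mul hC.le]
  rw [lintegral_const_mul _ (by fun_prop), hopen, lintegral_dirichletWeight u hu0 hv0 one_pos,
    one_rpow, one_mul, ← ENNReal.ofReal_mul hC.le, ← inv_div (Gamma (∑ i, u i + v)),
    mul_inv_cancel₀ hC.ne', ENNReal.ofReal_one]

theorem ae_dirK_nonneg (hu : ∀ i, 1 < u i) (hv : 1 < v) :
    0 ≤ᵐ[volume.restrict (Sd d)] dirK d u v :=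
  ae_restrict_of_forall_mem measurableSet_Sd fun _ hx =>
    dirK_nonneg (fun i => one_pos.trans (hu i)) (one_pos.trans hv) hx

theorem integrableOn_dirK (hu : ∀ i, 1 < u i) (hv : 1 < v) : IntegrableOn (dirK d u v) (Sd d) := by
  refine ⟨measurable_dirK.aestronglyMeasurable, ?_⟩
  rw [hasFiniteIntegral_iff_ofReal (ae_dirK_nonneg hu hv), lintegral_dirK hu hv]
  exact ENNReal.one_lt_top

theorem integral_dirK (hu : ∀ i, 1 < u i) (hv : 1 < v) : ∫ x in Sd d, dirK d u v x = 1 := by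
  rw [integral_eq_lintegral_of_nonneg_ae (ae_dirK_nonneg hu hv)
    measurable_dirK.aestronglyMeasurable, lintegral_dirK hu hv, ENNReal.toReal_one]

/-- The Dirichlet parameter `u` with its `i`-th coordinate raised by one: up to a constant, this is
the effect on the density of multiplication by `x_i`. -/
def raiseCoord (u : Fin d → ℝ) (i : Fin d) : Fin d → ℝ := u + Pi.single i 1

theorem raiseCoord_self (u : Fin d → ℝ) (i : Fin d) : raiseCoord u i i = u i + 1 := by
  simp [raiseCoord]

theorem raiseCoord_of_ne (u : Fin d → ℝ) {i j : Fin d} (hij : j ≠ i) : raiseCoord u i j = u j := by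
  simp [raiseCoord, hij]

theorem sum_raiseCoord (u : Fin d → ℝ) (i : Fin d) : ∑ j, raiseCoord u i j = ∑ j, u j + 1 := by
  simp [raiseCoord, Finset.sum_add_distrib]

theorem one_lt_raiseCoord (hu : ∀ j, 1 < u j) (i j : Fin d) : 1 < raiseCoord u i j := by
  rcases eq_or_ne j i with rfl | hij
  · rw [raiseCoord_self]
    linarith [hu j]
  · rw [raiseCoord_of_ne u hij]
    exact hu j

theorem dirK_mul_coord (hS : ∑ j, u j + v ≠ 0) {i : Fin d} (hui : u i ≠ 0) (hx : 0 ≤ x i) :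
    dirK d u v x * x i = u i / (∑ j, u j + v) * dirK d (raiseCoord u i) v x := by
  have hΓ : ∏ j, Gamma (raiseCoord u i j) = u i * ∏ j, Gamma (u j) := by
    rw [← Finset.mul_prod_erase _ _ (Finset.mem_univ i),
      ← Finset.mul_prod_erase _ (fun j => Gamma (u j)) (Finset.mem_univ i), ← mul_assoc,
      ← Gamma_add_one hui, raiseCoord_self]
    congr 1
    refine Finset.prod_congr rfl fun j hj => ?_
    rw [raiseCoord_of_ne u (Finset.ne_of_mem_erase hj)]
  have hpow : ∏ j, x j ^ (raiseCoord u i j - 1) = (∏ j, x j ^ (u j - 1)) * x i := by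
    rw [← Finset.prod_erase_mul _ _ (Finset.mem_univ i),
      ← Finset.prod_erase_mul _ (fun j => x j ^ (u j - 1)) (Finset.mem_univ i), mul_assoc,
      ← rpow_add_one' hx (by simpa using hui), raiseCoord_self, sub_add_cancel,
      add_sub_cancel_right]
    congr 1
    refine Finset.prod_congr rfl fun j hj => ?_
    rw [raiseCoord_of_ne u (Finset.ne_of_mem_erase hj)]
  rw [dirK, dirK, sum_raiseCoord, hΓ, hpow, add_right_comm, Gamma_add_one hS]
  field_simp

theorem integral_dirK_mul_sq_sub (hu : ∀ i, 1 < u i) (hv : 1 < v) (i : Fin d) (c : ℝ) :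
    ∫ x in Sd d, dirK d u v x * (x i - c) ^ 2 =
      u i / (∑ j, u j + v) * ((u i + 1) / (∑ j, u j + v + 1)) - 2 * c * (u i / (∑ j, u j + v)) +
        c ^ 2 := by
  set S := ∑ j, u j + v
  have hu0 (j : Fin d) : 0 < u j := one_pos.trans (hu j)
  have hSpos : 0 < S := add_pos_of_nonneg_of_pos (Finset.sum_nonneg fun j _ => (hu0 j).le)
    (one_pos.trans hv)
  have hu1 := one_lt_raiseCoord hu i
  have hu2 := one_lt_raiseCoord hu1 i
  have hu1i := raiseCoord_self u i
  have hS1 : ∑ j, raiseCoord u i j + v = S + 1 := by rw [sum_raiseCoord, add_right_comm]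
  have hexpand : Set.EqOn (fun x => dirK d u v x * (x i - c) ^ 2) (fun x =>
      u i / S * ((u i + 1) / (S + 1)) * dirK d (raiseCoord (raiseCoord u i) i) v x -
        2 * c * (u i / S) * dirK d (raiseCoord u i) v x + c ^ 2 * dirK d u v x) (Sd d) := by
    intro x hx
    have h1 := dirK_mul_coord hSpos.ne' (hu0 i).ne' (hx.1 i).1
    have h2 := dirK_mul_coord (u := raiseCoord u i) (v := v) (by rw [hS1]; positivity)
      (one_pos.trans (hu1 i)).ne' (hx.1 i).1
    rw [hS1, hu1i] at h2
    linear_combination (x i - 2 * c) * h1 + u i / S * h2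
  have i2 := (integrableOn_dirK hu2 hv).const_mul (u i / S * ((u i + 1) / (S + 1)))
  have i1 := (integrableOn_dirK hu1 hv).const_mul (2 * c * (u i / S))
  have i0 := (integrableOn_dirK hu hv).const_mul (c ^ 2)
  rw [setIntegral_congr_fun measurableSet_Sd hexpand, integral_add (by exact i2.sub i1) i0,
    integral_sub i2 i1, integral_const_mul, integral_const_mul, integral_const_mul,
    integral_dirK hu hv, integral_dirK hu1 hv, integral_dirK hu2 hv]
  ring

end DirichletDensity

section Barycentric

variable {d : ℕ}

/-- The barycentric coordinates of a point of the simplex. They make the coordinates `x_i` (index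
`some i`) and the slack `1 - ‖x‖₁` (index `none`) play symmetric roles. -/
def barycentric (x : Fin d → ℝ) (o : Option (Fin d)) : ℝ := o.elim (1 - ∑ i, x i) x

theorem sum_barycentric (x : Fin d → ℝ) : ∑ o, barycentric x o = 1 := by
  simp [barycentric, Fintype.sum_option]

theorem barycentric_nonneg {x : Fin d → ℝ} (hx : x ∈ Sd d) : ∀ o, 0 ≤ barycentric x o
  | none => sub_nonneg.2 (sum_le_one_of_mem_Sd hx)
  | some i => (hx.1 i).1

theorem barycentric_pos {s : Fin d → ℝ} (hs : s ∈ SdInt d) : ∀ o, 0 < barycentric s o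
  | none => sub_pos.2 (sum_lt_one_of_mem_SdInt hs)
  | some i => (hs.1 i).1

theorem prod_rpow_le_prod_rpow_self {ι : Type*} (t : Finset ι) {w z : ι → ℝ}
    (hw : ∀ i ∈ t, 0 < w i) (hw1 : ∑ i ∈ t, w i = 1) (hz : ∀ i ∈ t, 0 ≤ z i)
    (hz1 : ∑ i ∈ t, z i ≤ 1) : ∏ i ∈ t, z i ^ w i ≤ ∏ i ∈ t, w i ^ w i := by
  have hw0 : 0 ≤ ∏ i ∈ t, w i ^ w i := Finset.prod_nonneg fun i hi => rpow_nonneg (hw i hi).le _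
  have hamgm : ∏ i ∈ t, (z i / w i) ^ w i ≤ 1 :=
    calc ∏ i ∈ t, (z i / w i) ^ w i ≤ ∑ i ∈ t, w i * (z i / w i) :=
          geom_mean_le_arith_mean_weighted t w _ (fun i hi => (hw i hi).le) hw1
            fun i hi => div_nonneg (hz i hi) (hw i hi).le
      _ = ∑ i ∈ t, z i := Finset.sum_congr rfl fun i hi => mul_div_cancel₀ _ (hw i hi).ne'
      _ ≤ 1 := hz1
  calc ∏ i ∈ t, z i ^ w i = ∏ i ∈ t, w i ^ w i * (z i / w i) ^ w i :=
        Finset.prod_congr rfl fun i hi => by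
          rw [← mul_rpow (hw i hi).le (div_nonneg (hz i hi) (hw i hi).le),
            mul_div_cancel₀ _ (hw i hi).ne']
    _ = (∏ i ∈ t, w i ^ w i) * ∏ i ∈ t, (z i / w i) ^ w i := Finset.prod_mul_distrib
    _ ≤ ∏ i ∈ t, w i ^ w i := mul_le_of_le_one_right hw0 hamgm

end Barycentric

section Kernel

variable {d : ℕ} {s x y : Fin d → ℝ} {b : ℝ}

theorem sum_div_add_one_add_slack (s : Fin d → ℝ) (b : ℝ) :
    ∑ i, (s i / b + 1) + ((1 - ∑ i, s i) / b + 1) = b⁻¹ + 1 + d := by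
  rw [Finset.sum_add_distrib, ← Finset.sum_div]
  simp
  ring

theorem kappa_eq_Gamma_mul_prod : kappa d s b x = Gamma (b⁻¹ + 1 + d) *
    ∏ o, barycentric x o ^ (barycentric s o / b) / Gamma (barycentric s o / b + 1) := by
  rw [kappa, dirK, sum_div_add_one_add_slack, Finset.prod_div_distrib, Fintype.prod_option,
    Fintype.prod_option]
  simp only [barycentric, Option.elim, add_sub_cancel_right]
  ring

theorem one_lt_div_add_one_of_mem_SdInt (hs : s ∈ SdInt d) (hb : 0 < b) (i : Fin d) :
    1 < s i / b + 1 :=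
  lt_add_of_pos_left _ (div_pos (hs.1 i).1 hb)

theorem one_lt_slack_div_add_one_of_mem_SdInt (hs : s ∈ SdInt d) (hb : 0 < b) :
    1 < (1 - ∑ i, s i) / b + 1 :=
  lt_add_of_pos_left _ (div_pos (sub_pos.2 (sum_lt_one_of_mem_SdInt hs)) hb)

@[fun_prop]
theorem measurable_kappa : Measurable (kappa d s b) := measurable_dirK

theorem kappa_nonneg (hs : s ∈ SdInt d) (hb : 0 < b) (hx : x ∈ Sd d) : 0 ≤ kappa d s b x :=
  dirK_nonneg (fun i => one_pos.trans (one_lt_div_add_one_of_mem_SdInt hs hb i))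
    (one_pos.trans (one_lt_slack_div_add_one_of_mem_SdInt hs hb)) hx

theorem kappa_self_pos (hs : s ∈ SdInt d) (hb : 0 < b) : 0 < kappa d s b s := by
  rw [kappa_eq_Gamma_mul_prod]
  refine mul_pos (Gamma_pos_of_pos (by positivity)) (Finset.prod_pos fun o _ => ?_)
  have hσ := barycentric_pos hs o
  exact div_pos (rpow_pos_of_pos hσ _) (Gamma_pos_of_pos (by positivity))

theorem kappa_le_kappa_self (hs : s ∈ SdInt d) (hb : 0 < b) (hx : x ∈ Sd d) :
    kappa d s b x ≤ kappa d s b s := by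
  have hσ := barycentric_pos hs
  have hroot {z : Fin d → ℝ} (hz : z ∈ Sd d) : ∏ o, barycentric z o ^ (barycentric s o / b) =
      (∏ o, barycentric z o ^ barycentric s o) ^ b⁻¹ := by
    rw [← finsetProd_rpow _ _ fun o _ => rpow_nonneg (barycentric_nonneg hz o) _]
    exact Finset.prod_congr rfl fun o _ => by
      rw [← rpow_mul (barycentric_nonneg hz o), div_eq_mul_inv]
  have hΓ : 0 < ∏ o, Gamma (barycentric s o / b + 1) := Finset.prod_pos fun o _ =>
    Gamma_pos_of_pos (add_pos (div_pos (hσ o) hb) one_pos)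
  have hΓ' : 0 < Gamma (b⁻¹ + 1 + d) := Gamma_pos_of_pos (by positivity)
  have hnonneg : 0 ≤ ∏ o, barycentric x o ^ barycentric s o :=
    Finset.prod_nonneg fun o _ => rpow_nonneg (barycentric_nonneg hx o) _
  rw [kappa_eq_Gamma_mul_prod, kappa_eq_Gamma_mul_prod, Finset.prod_div_distrib,
    Finset.prod_div_distrib, hroot hx, hroot (SdInt_subset_Sd hs)]
  have hgibbs := prod_rpow_le_prod_rpow_self Finset.univ (fun o _ => hσ o) (sum_barycentric s)
    (fun o _ => barycentric_nonneg hx o) (sum_barycentric x).le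
  exact mul_le_mul_of_nonneg_left (div_le_div_of_nonneg_right
    (rpow_le_rpow hnonneg hgibbs (inv_nonneg.2 hb.le)) hΓ.le) hΓ'.le

theorem kappa_sq_mul_kappa_half (hx : x ∈ Sd d) (hy : y ∈ Sd d) :
    kappa d s b x ^ 2 * kappa d s (b / 2) y = kappa d s b y ^ 2 * kappa d s (b / 2) x := by
  have hsq {z : Fin d → ℝ} (hz : z ∈ Sd d) : ∏ o, barycentric z o ^ (barycentric s o / (b / 2)) =
      (∏ o, barycentric z o ^ (barycentric s o / b)) ^ 2 := by
    rw [← Finset.prod_pow]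
    refine Finset.prod_congr rfl fun o _ => ?_
    rw [← rpow_mul_natCast (barycentric_nonneg hz o)]
    congr 1
    push_cast
    ring
  simp only [kappa_eq_Gamma_mul_prod, Finset.prod_div_distrib, hsq hx, hsq hy]
  ring

/-- The limit of `b^{d/2} κ_{s,b}(s)` as `b → 0`: up to the factor `b^{-d/2}`, the height of the
kernel at its mode. -/
noncomputable def kappaPeak (d : ℕ) (s : Fin d → ℝ) : ℝ :=
  (2 * π) ^ (-(d : ℝ) / 2) / ∏ o, √(barycentric s o)

theorem kappaPeak_pos (hs : s ∈ SdInt d) : 0 < kappaPeak d s :=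
  div_pos (rpow_pos_of_pos (by positivity) _)
    (Finset.prod_pos fun o _ => sqrt_pos.2 (barycentric_pos hs o))

theorem rpow_mul_kappa_self (hs : s ∈ SdInt d) (hb : 0 < b) :
    b ^ ((d : ℝ) / 2) * kappa d s b s = (∏ o, Rfun (barycentric s o / b)) / Rfun b⁻¹ *
      (∏ k ∈ Finset.range d, (b⁻¹ + 1 + k) / b⁻¹) * kappaPeak d s := by
  set N := b⁻¹ with hN
  have hNpos : 0 < N := inv_pos.2 hb
  have hσ := barycentric_pos hs
  have hfactor (o : Option (Fin d)) :
      barycentric s o ^ (barycentric s o / b) / Gamma (barycentric s o / b + 1) =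
        Rfun (barycentric s o / b) * (√(2 * π))⁻¹ * (√N)⁻¹ * (√(barycentric s o))⁻¹ *
          (exp N / N ^ N) ^ barycentric s o := by
    have hσo := hσ o
    have hR := Rfun_pos (mul_pos hσo hNpos)
    rw [div_eq_mul_inv _ b, ← hN, Gamma_add_one_eq_div_Rfun (mul_pos hσo hNpos),
      rpow_add (mul_pos hσo hNpos), ← sqrt_eq_rpow, sqrt_mul hσo.le, mul_rpow hσo.le hNpos.le,
      div_rpow (exp_pos _).le (by positivity), ← rpow_mul hNpos.le, ← exp_mul, exp_neg,
      mul_comm N]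
    field_simp
  have hprod : ∏ o, (exp N / N ^ N) ^ barycentric s o = exp N / N ^ N := by
    rw [← rpow_sum_of_pos (by positivity), sum_barycentric, rpow_one]
  have hb' : b ^ ((d : ℝ) / 2) = (√N ^ d)⁻¹ := by
    rw [sqrt_eq_rpow, ← rpow_mul_natCast hNpos.le, hN, inv_rpow hb.le, inv_inv]
    ring_nf
  have hπ : (2 * π) ^ (-(d : ℝ) / 2) = (√(2 * π) ^ d)⁻¹ := by
    rw [sqrt_eq_rpow, ← rpow_mul_natCast (by positivity), ← rpow_neg (by positivity)]
    ring_nf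
  have hR := Rfun_pos hNpos
  have hden : 0 < ∏ o, √(barycentric s o) := Finset.prod_pos fun o _ => sqrt_pos.2 (hσ o)
  rw [kappa_eq_Gamma_mul_prod, Finset.prod_congr rfl fun o _ => hfactor o,
    Gamma_add_one_add_natCast hNpos.le, Gamma_add_one_eq_div_Rfun hNpos, kappaPeak, hb', hπ,
    rpow_add hNpos, ← sqrt_eq_rpow, exp_neg]
  simp only [Finset.prod_mul_distrib, hprod, Finset.prod_const, Finset.prod_inv_distrib,
    Finset.prod_div_distrib, Finset.card_univ, Fintype.card_option, Fintype.card_fin,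
    Finset.card_range]
  have hsqN : N ^ d = √N ^ d * √N ^ d := by rw [← mul_pow, mul_self_sqrt hNpos.le]
  simp only [hsqN, pow_succ, inv_pow]
  field_simp

theorem tendsto_rpow_mul_kappa_self (hs : s ∈ SdInt d) :
    Tendsto (fun b => b ^ ((d : ℝ) / 2) * kappa d s b s) (𝓝[>] 0) (𝓝 (kappaPeak d s)) := by
  have hinv : Tendsto (fun b : ℝ => b⁻¹) (𝓝[>] 0) atTop := tendsto_inv_nhdsGT_zero
  have hR : Tendsto (fun b => (∏ o, Rfun (barycentric s o / b)) / Rfun b⁻¹) (𝓝[>] 0) (𝓝 1) := by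
    have h (o : Option (Fin d)) :
        Tendsto (fun b => Rfun (barycentric s o / b)) (𝓝[>] 0) (𝓝 1) :=
      tendsto_Rfun.comp (hinv.const_mul_atTop (barycentric_pos hs o))
    have hdiv := (tendsto_finsetProd Finset.univ fun o _ => h o).div (tendsto_Rfun.comp hinv)
      one_ne_zero
    rwa [Finset.prod_const_one, div_one] at hdiv
  have hprod : Tendsto (fun b : ℝ => ∏ k ∈ Finset.range d, (b⁻¹ + 1 + k) / b⁻¹) (𝓝[>] 0)
      (𝓝 1) := by
    have h (k : ℕ) : Tendsto (fun b : ℝ => (b⁻¹ + 1 + k) / b⁻¹) (𝓝[>] 0) (𝓝 1) := by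
      have h0 : Tendsto (fun b : ℝ => 1 + (1 + k) * b) (𝓝[>] 0) (𝓝 (1 + (1 + k) * 0)) :=
        (Continuous.tendsto (by fun_prop) 0).mono_left nhdsWithin_le_nhds
      rw [mul_zero, add_zero] at h0
      refine h0.congr' ?_
      filter_upwards [self_mem_nhdsWithin] with b hb
      have : b ≠ 0 := (Set.mem_Ioi.1 hb).ne'
      field_simp
      ring
    simpa using tendsto_finsetProd (Finset.range d) fun k _ => h k
  have hmain := (hR.mul hprod).mul_const (kappaPeak d s)
  rw [one_mul, one_mul] at hmain
  refine hmain.congr' ?_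
  filter_upwards [self_mem_nhdsWithin] with b hb using (rpow_mul_kappa_self hs hb).symm

theorem psiFun_eq : psiFun d s = kappaPeak d s * (2 : ℝ) ^ (-(d : ℝ) / 2) := by
  rw [psiFun, kappaPeak, Fintype.prod_option, show 4 * π = 2 * π * 2 by ring,
    mul_rpow (by positivity) zero_le_two]
  simp only [← sqrt_eq_rpow, barycentric, Option.elim]
  ring

theorem psiFun_nonneg (hs : s ∈ SdInt d) : 0 ≤ psiFun d s := by
  rw [psiFun_eq]
  exact mul_nonneg (kappaPeak_pos hs).le (by positivity)

theorem tendsto_half_nhdsGT_zero : Tendsto (fun b : ℝ => b / 2) (𝓝[>] 0) (𝓝[>] 0) := by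
  refine tendsto_nhdsWithin_iff.2 ⟨?_, ?_⟩
  · simpa using ((continuous_id.div_const (2 : ℝ)).tendsto 0).mono_left nhdsWithin_le_nhds
  · filter_upwards [self_mem_nhdsWithin] with b hb using half_pos (Set.mem_Ioi.1 hb)

theorem tendsto_rpow_mul_kappa_self_sq_div (hs : s ∈ SdInt d) :
    Tendsto (fun b => b ^ ((d : ℝ) / 2) * (kappa d s b s ^ 2 / kappa d s (b / 2) s)) (𝓝[>] 0)
      (𝓝 (psiFun d s)) := by
  have hpeak := kappaPeak_pos hs
  have h := tendsto_rpow_mul_kappa_self hs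
  have hmain := ((h.pow 2).div (h.comp tendsto_half_nhdsGT_zero) hpeak.ne').mul_const
    ((2 : ℝ) ^ (-(d : ℝ) / 2))
  rw [sq, mul_self_div_self, ← psiFun_eq] at hmain
  refine hmain.congr' ?_
  filter_upwards [self_mem_nhdsWithin] with b hb
  have hb : 0 < b := hb
  have hκ := kappa_self_pos hs (half_pos hb)
  have hpow : (b / 2) ^ ((d : ℝ) / 2) = b ^ ((d : ℝ) / 2) * 2 ^ (-(d : ℝ) / 2) := by
    rw [div_rpow hb.le zero_le_two, neg_div, rpow_neg zero_le_two, div_eq_mul_inv]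
  change (b ^ ((d : ℝ) / 2) * kappa d s b s) ^ 2 /
    ((b / 2) ^ ((d : ℝ) / 2) * kappa d s (b / 2) s) * 2 ^ (-(d : ℝ) / 2) = _
  rw [hpow]
  field_simp

end Kernel

section ApproximateIdentity

theorem tendsto_integral_mul_of_tendsto_integral_mul_zero {E ι : Type*} [MeasurableSpace E]
    {μ : Measure E} {l : Filter ι} {K : ι → E → ℝ} {g V : E → ℝ} {c : ℝ}
    (hK : ∀ᶠ i in l, Integrable (K i) μ) (hK0 : ∀ᶠ i in l, 0 ≤ᵐ[μ] K i)
    (hK1 : ∀ᶠ i in l, ∫ x, K i x ∂μ = 1)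
    (hKg : ∀ᶠ i in l, Integrable (fun x => K i x * g x) μ)
    (hKV : ∀ᶠ i in l, Integrable (fun x => K i x * V x) μ)
    (hV : Tendsto (fun i => ∫ x, K i x * V x ∂μ) l (𝓝 0))
    (hg : ∀ ε > 0, ∃ C, ∀ᵐ x ∂μ, |g x - c| ≤ ε + C * V x) :
    Tendsto (fun i => ∫ x, K i x * g x ∂μ) l (𝓝 c) := by
  refine Metric.tendsto_nhds.2 fun ε hε => ?_
  obtain ⟨C, hC⟩ := hg (ε / 2) (half_pos hε)
  have hlim : Tendsto (fun i => ε / 2 + C * ∫ x, K i x * V x ∂μ) l (𝓝 (ε / 2)) := by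
    simpa using (hV.const_mul C).const_add (ε / 2)
  filter_upwards [hlim.eventually_lt_const (half_lt_self hε), hK, hK0, hK1, hKg, hKV] with
    i hlt hint hnonneg hone hintg hintV
  have hsub : ∫ x, K i x * g x ∂μ - c = ∫ x, K i x * g x - K i x * c ∂μ := by
    rw [integral_sub hintg (hint.mul_const c), integral_mul_const, hone, one_mul]
  have hsum : ε / 2 + C * ∫ x, K i x * V x ∂μ =
      ∫ x, K i x * (ε / 2) + C * (K i x * V x) ∂μ := by
    rw [integral_add (hint.mul_const _) (hintV.const_mul C), integral_mul_const,
      integral_const_mul, hone, one_mul]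
  rw [Real.dist_eq, hsub, ← Real.norm_eq_abs]
  rw [hsum] at hlt
  have hdom : Integrable (fun x => K i x * (ε / 2) + C * (K i x * V x)) μ :=
    (hint.mul_const _).add (hintV.const_mul C)
  refine lt_of_le_of_lt (norm_integral_le_of_norm_le hdom ?_) hlt
  filter_upwards [hnonneg, hC] with x hx hgx
  rw [← mul_sub, norm_mul, Real.norm_of_nonneg hx, Real.norm_eq_abs]
  calc K i x * |g x - c| ≤ K i x * (ε / 2 + C * V x) := mul_le_mul_of_nonneg_left hgx hx
    _ = K i x * (ε / 2) + C * (K i x * V x) := by ring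

theorem exists_abs_sub_le_add_mul_sum_sq {ι : Type*} [Fintype ι] {A : Set (ι → ℝ)} {s : ι → ℝ}
    {g : (ι → ℝ) → ℝ} (hgs : ContinuousWithinAt g A s) {M : ℝ} (hM : ∀ x ∈ A, |g x| ≤ M)
    (hs : s ∈ A) {ε : ℝ} (hε : 0 < ε) :
    ∃ C, ∀ x ∈ A, |g x - g s| ≤ ε + C * ∑ i, (x i - s i) ^ 2 := by
  obtain ⟨δ, hδ, hcont⟩ := Metric.continuousWithinAt_iff.1 hgs ε hε
  have hM0 : 0 ≤ M := (abs_nonneg _).trans (hM s hs)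
  refine ⟨2 * M / δ ^ 2, fun x hx => ?_⟩
  have : 0 ≤ ∑ i, (x i - s i) ^ 2 := Finset.sum_nonneg fun i _ => sq_nonneg _
  rcases lt_or_ge (dist x s) δ with hnear | hfar
  · have hgx : |g x - g s| < ε := hcont hx hnear
    have : 0 ≤ 2 * M / δ ^ 2 * ∑ i, (x i - s i) ^ 2 := by positivity
    linarith
  · obtain ⟨i, hi⟩ : ∃ i, δ ≤ |x i - s i| := by
      by_contra! hall
      exact hfar.not_gt ((dist_pi_lt_iff hδ).2 hall)
    have hδsum : δ ^ 2 ≤ ∑ i, (x i - s i) ^ 2 :=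
      calc δ ^ 2 ≤ |x i - s i| ^ 2 := pow_le_pow_left₀ hδ.le hi 2
        _ = (x i - s i) ^ 2 := sq_abs _
        _ ≤ ∑ i, (x i - s i) ^ 2 :=
          Finset.single_le_sum (f := fun i => (x i - s i) ^ 2) (fun _ _ => sq_nonneg _)
            (Finset.mem_univ i)
    calc |g x - g s| ≤ |g x| + |g s| := abs_sub _ _
      _ ≤ 2 * M / δ ^ 2 * δ ^ 2 := by
        rw [div_mul_cancel₀ _ (by positivity)]
        linarith [hM x hx, hM s hs]
      _ ≤ 2 * M / δ ^ 2 * ∑ i, (x i - s i) ^ 2 := by gcongr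
      _ ≤ ε + 2 * M / δ ^ 2 * ∑ i, (x i - s i) ^ 2 := le_add_of_nonneg_left hε.le

variable {d : ℕ} {s : Fin d → ℝ} {b : ℝ} {g : (Fin d → ℝ) → ℝ} {M : ℝ}

theorem integrableOn_kappa (hs : s ∈ SdInt d) (hb : 0 < b) : IntegrableOn (kappa d s b) (Sd d) :=
  integrableOn_dirK (one_lt_div_add_one_of_mem_SdInt hs hb)
    (one_lt_slack_div_add_one_of_mem_SdInt hs hb)

theorem integral_kappa (hs : s ∈ SdInt d) (hb : 0 < b) : ∫ x in Sd d, kappa d s b x = 1 :=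
  integral_dirK (one_lt_div_add_one_of_mem_SdInt hs hb)
    (one_lt_slack_div_add_one_of_mem_SdInt hs hb)

theorem integrableOn_kappa_mul (hs : s ∈ SdInt d) (hb : 0 < b)
    (hg : AEStronglyMeasurable g (volume.restrict (Sd d))) (hM : ∀ x ∈ Sd d, |g x| ≤ M) :
    IntegrableOn (fun x => kappa d s b x * g x) (Sd d) :=
  (integrableOn_kappa hs hb).mul_bdd (c := M) hg (ae_restrict_of_forall_mem measurableSet_Sd hM)

theorem integrableOn_kappa_mul_sq_sub (hs : s ∈ SdInt d) (hb : 0 < b) (i : Fin d) :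
    IntegrableOn (fun x => kappa d s b x * (x i - s i) ^ 2) (Sd d) := by
  refine integrableOn_kappa_mul hs hb (M := 1)
    (Measurable.aestronglyMeasurable (by fun_prop)) fun x hx => ?_
  rw [abs_of_nonneg (sq_nonneg _), sq_le_one_iff_abs_le_one, abs_le]
  constructor <;> linarith [(hx.1 i).1, (hx.1 i).2, (hs.1 i).1, (hs.1 i).2]

theorem tendsto_integral_kappa_mul_sq_sub (hs : s ∈ SdInt d) (i : Fin d) :
    Tendsto (fun b => ∫ x in Sd d, kappa d s b x * (x i - s i) ^ 2) (𝓝[>] 0) (𝓝 0) := by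
  have hlim {c k : ℝ} : Tendsto (fun b => (s i + c * b) / (1 + k * b)) (𝓝[>] 0) (𝓝 (s i)) := by
    have hcont : ContinuousAt (fun b => (s i + c * b) / (1 + k * b)) 0 := by
      fun_prop (disch := simp)
    simpa using hcont.tendsto.mono_left nhdsWithin_le_nhds
  have hvar := ((hlim (c := 1) (k := d + 1)).mul (hlim (c := 2) (k := d + 2))).sub
    ((hlim (c := 1) (k := d + 1)).const_mul (2 * s i)) |>.add_const (s i ^ 2)
  rw [show s i * s i - 2 * s i * s i + s i ^ 2 = 0 by ring] at hvar
  refine hvar.congr' ?_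
  filter_upwards [self_mem_nhdsWithin] with b hb
  have hb : 0 < b := hb
  simp only [kappa]
  rw [integral_dirK_mul_sq_sub (one_lt_div_add_one_of_mem_SdInt hs hb)
    (one_lt_slack_div_add_one_of_mem_SdInt hs hb), sum_div_add_one_add_slack]
  field_simp
  ring

theorem tendsto_integral_kappa_mul (hs : s ∈ SdInt d)
    (hg : AEStronglyMeasurable g (volume.restrict (Sd d))) (hM : ∀ x ∈ Sd d, |g x| ≤ M)
    (hgs : ContinuousWithinAt g (Sd d) s) :
    Tendsto (fun b => ∫ x in Sd d, kappa d s b x * g x) (𝓝[>] 0) (𝓝 (g s)) := by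
  have hev {q : ℝ → Prop} (hq : ∀ b, 0 < b → q b) : ∀ᶠ b in 𝓝[>] 0, q b :=
    eventually_nhdsWithin_of_forall hq
  have hsum {b : ℝ} (x : Fin d → ℝ) : kappa d s b x * ∑ i, (x i - s i) ^ 2 =
    ∑ i, kappa d s b x * (x i - s i) ^ 2 := Finset.mul_sum _ _ _
  refine tendsto_integral_mul_of_tendsto_integral_mul_zero (V := fun x => ∑ i, (x i - s i) ^ 2)
    (hev fun b hb => integrableOn_kappa hs hb)
    (hev fun b hb => ae_restrict_of_forall_mem measurableSet_Sd fun x => kappa_nonneg hs hb)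
    (hev fun b hb => integral_kappa hs hb)
    (hev fun b hb => integrableOn_kappa_mul hs hb hg hM) (hev fun b hb => ?_) ?_ fun ε hε => ?_
  · simp only [hsum]
    exact integrable_finsetSum _ fun i _ => integrableOn_kappa_mul_sq_sub hs hb i
  · have hlim := tendsto_finsetSum Finset.univ fun i _ => tendsto_integral_kappa_mul_sq_sub hs i
    rw [Finset.sum_const_zero] at hlim
    refine hlim.congr' (hev fun b hb => ?_)
    simp only [hsum]
    exact (integral_finsetSum _ fun i _ => integrableOn_kappa_mul_sq_sub hs hb i).symm
  · obtain ⟨C, hC⟩ := exists_abs_sub_le_add_mul_sum_sq hgs hM (SdInt_subset_Sd hs) hε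
    exact ⟨C, ae_restrict_of_forall_mem measurableSet_Sd hC⟩

theorem tendsto_rpow_mul_integral_kappa_sq_mul (hs : s ∈ SdInt d)
    (hg : AEStronglyMeasurable g (volume.restrict (Sd d))) (hM : ∀ x ∈ Sd d, |g x| ≤ M)
    (hgs : ContinuousWithinAt g (Sd d) s) :
    Tendsto (fun b => b ^ ((d : ℝ) / 2) * ∫ x in Sd d, kappa d s b x ^ 2 * g x) (𝓝[>] 0)
      (𝓝 (psiFun d s * g s)) := by
  have hmain := (tendsto_rpow_mul_kappa_self_sq_div hs).mul
    ((tendsto_integral_kappa_mul hs hg hM hgs).comp tendsto_half_nhdsGT_zero)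
  refine hmain.congr' ?_
  filter_upwards [self_mem_nhdsWithin] with b hb
  have hκ := (kappa_self_pos hs (half_pos (Set.mem_Ioi.1 hb))).ne'
  rw [Function.comp_apply, mul_assoc, ← integral_const_mul]
  congr 1
  refine setIntegral_congr_fun measurableSet_Sd fun x hx => ?_
  rw [← mul_assoc, div_mul_eq_mul_div, ← kappa_sq_mul_kappa_half hx (SdInt_subset_Sd hs),
    mul_div_cancel_right₀ _ hκ]

end ApproximateIdentity

section StrongMixing

variable {Ω E : Type*} [NormedAddCommGroup E] [NormedSpace ℝ E]

/-- `a` bounds the strong mixing coefficient of the σ-algebras `F` and `G`, that is,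
`|P(A ∩ B) - P(A) P(B)| ≤ a` for all events `A` of `F` and `B` of `G`. -/
def IsAlphaMixing (F G : MeasurableSpace Ω) {_ : MeasurableSpace Ω} (P : Measure Ω) (a : ℝ) :
    Prop :=
  ∀ A B, MeasurableSet[F] A → MeasurableSet[G] B → |P.real (A ∩ B) - P.real A * P.real B| ≤ a

theorem integral_abs_eq_two_mul_setIntegral {m0 : MeasurableSpace Ω} {P : Measure Ω} {V : Ω → ℝ}
    (hV : Integrable V P) (hV0 : ∫ ω, V ω ∂P = 0) (hA : MeasurableSet {ω | 0 ≤ V ω}) :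
    ∫ ω, |V ω| ∂P = 2 * ∫ ω in {ω | 0 ≤ V ω}, V ω ∂P := by
  have hsplit := integral_add_compl hA hV
  have hsplit_abs := integral_add_compl hA hV.abs
  have hpos : ∫ ω in {ω | 0 ≤ V ω}, |V ω| ∂P = ∫ ω in {ω | 0 ≤ V ω}, V ω ∂P :=
    setIntegral_congr_fun hA fun ω hω => abs_of_nonneg hω
  have hneg : ∫ ω in {ω | 0 ≤ V ω}ᶜ, |V ω| ∂P = -∫ ω in {ω | 0 ≤ V ω}ᶜ, V ω ∂P := by
    rw [← integral_neg]
    exact setIntegral_congr_fun hA.compl fun ω hω => abs_of_neg (not_le.1 hω)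
  linarith

-- With `V = E[Z | F] - E[Z]` the left side is `‖E[V Y]‖ ≤ M E|V|`, and `A = {V ≥ 0}`.
theorem exists_norm_integral_smul_sub_le [CompleteSpace E] {F m0 : MeasurableSpace Ω} (hF : F ≤ m0)
    {P : Measure Ω} [IsProbabilityMeasure P] {Y : Ω → E} {Z : Ω → ℝ} {M : ℝ}
    (hY : StronglyMeasurable[F] Y) (hYM : ∀ ω, ‖Y ω‖ ≤ M) (hZ : Integrable Z P) :
    ∃ A, MeasurableSet[F] A ∧ ‖∫ ω, Z ω • Y ω ∂P - (∫ ω, Z ω ∂P) • ∫ ω, Y ω ∂P‖ ≤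
      2 * M * (∫ ω in A, Z ω ∂P - P.real A * ∫ ω, Z ω ∂P) := by
  set c := ∫ ω, Z ω ∂P
  set V := P[fun ω => Z ω - c|F]
  have hWint : Integrable (fun ω => Z ω - c) P := hZ.sub (integrable_const _)
  have hYmeas : AEStronglyMeasurable Y P := (hY.mono hF).aestronglyMeasurable
  have hYint : Integrable Y P := .of_bound hYmeas M (ae_of_all _ hYM)
  have hZY : Integrable (fun ω => Z ω • Y ω) P := hZ.smul_bdd M hYmeas (ae_of_all _ hYM)
  have hWY : Integrable ((fun ω => Z ω - c) • Y) P := hWint.smul_bdd M hYmeas (ae_of_all _ hYM)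
  have hVint : Integrable V P := integrable_condExp
  have hA : MeasurableSet[F] {ω | 0 ≤ V ω} :=
    stronglyMeasurable_condExp.measurable measurableSet_Ici
  refine ⟨{ω | 0 ≤ V ω}, hA, ?_⟩
  have hcov : ∫ ω, Z ω • Y ω ∂P - c • ∫ ω, Y ω ∂P = ∫ ω, V ω • Y ω ∂P := by
    have hpull : P[(fun ω => Z ω - c) • Y|F] =ᵐ[P] V • Y :=
      condExp_smul_of_aestronglyMeasurable_right hWint hWY hY.aestronglyMeasurable
    calc ∫ ω, Z ω • Y ω ∂P - c • ∫ ω, Y ω ∂P = ∫ ω, (Z ω - c) • Y ω ∂P := by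
          simp only [sub_smul]
          rw [← integral_smul]
          exact (integral_sub hZY (hYint.smul c)).symm
      _ = ∫ ω, V ω • Y ω ∂P := (integral_condExp hF).symm.trans (integral_congr_ae hpull)
  have hVA : ∫ ω in {ω | 0 ≤ V ω}, V ω ∂P =
      ∫ ω in {ω | 0 ≤ V ω}, Z ω ∂P - P.real {ω | 0 ≤ V ω} * c := by
    rw [setIntegral_condExp hF hWint hA, integral_sub hZ.integrableOn (integrable_const _)]
    simp
  have hV0 : ∫ ω, V ω ∂P = 0 := by
    rw [integral_condExp hF, integral_sub hZ (integrable_const _)]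
    simp [c]
  rw [hcov, ← hVA, mul_comm 2 M, mul_assoc,
    ← integral_abs_eq_two_mul_setIntegral hVint hV0 (hF _ hA), ← integral_const_mul]
  refine norm_integral_le_of_norm_le (hVint.abs.const_mul M) (ae_of_all _ fun ω => ?_)
  rw [norm_smul, mul_comm, Real.norm_eq_abs]
  exact mul_le_mul_of_nonneg_right (hYM ω) (abs_nonneg _)

variable {F G m0 : MeasurableSpace Ω} {P : Measure Ω} [IsProbabilityMeasure P] {a : ℝ}

theorem IsAlphaMixing.norm_integral_smul_sub_le [CompleteSpace E] (ha : IsAlphaMixing F G P a)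
    (hF : F ≤ m0) (hG : G ≤ m0) {Y : Ω → E} {Z : Ω → ℝ} {M N : ℝ}
    (hY : StronglyMeasurable[F] Y) (hYM : ∀ ω, ‖Y ω‖ ≤ M)
    (hZ : StronglyMeasurable[G] Z) (hZN : ∀ ω, |Z ω| ≤ N) :
    ‖∫ ω, Z ω • Y ω ∂P - (∫ ω, Z ω ∂P) • ∫ ω, Y ω ∂P‖ ≤ 4 * (M * N) * a := by
  obtain ⟨ω₀⟩ : Nonempty Ω := nonempty_of_isProbabilityMeasure P
  have hM : 0 ≤ M := (norm_nonneg _).trans (hYM ω₀)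
  have hN : 0 ≤ N := (abs_nonneg _).trans (hZN ω₀)
  have hZint : Integrable Z P :=
    .of_bound (hZ.mono hG).aestronglyMeasurable N (ae_of_all _ hZN)
  obtain ⟨A, hA, hYA⟩ := exists_norm_integral_smul_sub_le hF hY hYM hZint
  have hA' := hF _ hA
  obtain ⟨B, hB, hZB⟩ := exists_norm_integral_smul_sub_le hG hZ hZN
    ((integrable_const (1 : ℝ)).indicator (μ := P) hA')
  have hAZ : ∫ ω, A.indicator (fun _ => (1 : ℝ)) ω • Z ω ∂P = ∫ ω in A, Z ω ∂P := by
    rw [← integral_indicator hA']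
    congr with ω
    by_cases h : ω ∈ A <;> simp [h]
  rw [hAZ] at hZB
  simp only [integral_indicator hA', Measure.restrict_restrict hA', integral_const, smul_eq_mul,
    mul_one, measureReal_restrict_apply_univ] at hZB
  have hα := (le_abs_self _).trans (ha A B hA hB)
  rw [mul_comm (P.real A)] at hα
  calc _ ≤ 2 * M * (∫ ω in A, Z ω ∂P - P.real A * ∫ ω, Z ω ∂P) := hYA
    _ ≤ 2 * M * (2 * N * a) := by
      gcongr
      exact (le_abs_self _).trans (hZB.trans (by gcongr))
    _ = 4 * (M * N) * a := by ring

theorem IsAlphaMixing.abs_cov_le (ha : IsAlphaMixing F G P a) (hF : F ≤ m0) (hG : G ≤ m0)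
    {Y Z : Ω → ℝ} {M N : ℝ} (hY : StronglyMeasurable[F] Y) (hYM : ∀ ω, |Y ω| ≤ M)
    (hZ : StronglyMeasurable[G] Z) (hZN : ∀ ω, |Z ω| ≤ N) : |cov P Y Z| ≤ 4 * (M * N) * a := by
  simpa only [cov, mul_comm, smul_eq_mul, Real.norm_eq_abs] using
    ha.norm_integral_smul_sub_le hF hG hY hYM hZ hZN

theorem IsAlphaMixing.norm_integral_mul_sub_le (ha : IsAlphaMixing F G P a) (hF : F ≤ m0)
    (hG : G ≤ m0) {Y Z : Ω → ℂ} (hY : StronglyMeasurable[F] Y) (hY1 : ∀ ω, ‖Y ω‖ ≤ 1)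
    (hZ : StronglyMeasurable[G] Z) (hZ1 : ∀ ω, ‖Z ω‖ ≤ 1) :
    ‖∫ ω, Y ω * Z ω ∂P - (∫ ω, Y ω ∂P) * ∫ ω, Z ω ∂P‖ ≤ 8 * a := by
  have hYmeas : AEStronglyMeasurable Y P := (hY.mono hF).aestronglyMeasurable
  have hZint : Integrable Z P :=
    .of_bound (hZ.mono hG).aestronglyMeasurable 1 (ae_of_all _ hZ1)
  have hre := ha.norm_integral_smul_sub_le hF hG hY hY1
    (Complex.continuous_re.comp_stronglyMeasurable hZ)
    fun ω => (Complex.abs_re_le_norm _).trans (hZ1 ω)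
  have him := ha.norm_integral_smul_sub_le hF hG hY hY1
    (Complex.continuous_im.comp_stronglyMeasurable hZ)
    fun ω => (Complex.abs_im_le_norm _).trans (hZ1 ω)
  have hZeq : ∫ ω, Z ω ∂P = (∫ ω, (Z ω).re ∂P : ℝ) + (∫ ω, (Z ω).im ∂P : ℝ) * Complex.I :=
    (integral_re_add_im hZint).symm
  have hYZeq : ∫ ω, Y ω * Z ω ∂P =
      ∫ ω, (Z ω).re • Y ω ∂P + (∫ ω, (Z ω).im • Y ω ∂P) * Complex.I := by
    rw [← integral_mul_const]
    refine Eq.trans ?_ (integral_add (hZint.re.smul_bdd 1 hYmeas (ae_of_all _ hY1))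
      ((hZint.im.smul_bdd 1 hYmeas (ae_of_all _ hY1)).mul_const Complex.I))
    congr with ω
    change Y ω * Z ω = (Z ω).re • Y ω + (Z ω).im • Y ω * Complex.I
    conv_lhs => rw [← Complex.re_add_im (Z ω)]
    simp only [Complex.real_smul]
    ring
  calc _ = ‖(∫ ω, (Z ω).re • Y ω ∂P - (∫ ω, (Z ω).re ∂P) • ∫ ω, Y ω ∂P) +
        (∫ ω, (Z ω).im • Y ω ∂P - (∫ ω, (Z ω).im ∂P) • ∫ ω, Y ω ∂P) * Complex.I‖ := by
        rw [hYZeq, hZeq, Complex.real_smul, Complex.real_smul]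
        ring_nf
    _ ≤ 4 * (1 * 1) * a + 4 * (1 * 1) * a := by
        refine norm_add_le_of_le hre ?_
        rw [norm_mul, Complex.norm_I, mul_one]
        exact him
    _ = 8 * a := by ring

theorem norm_integral_prod_sub_prod_integral_le (ha0 : 0 ≤ a) {F G : ℕ → MeasurableSpace Ω}
    (hF : ∀ j, F j ≤ m0) (hG : ∀ j, G j ≤ m0) (ha : ∀ j, 0 < j → IsAlphaMixing (F j) (G j) P a)
    {Y : ℕ → Ω → ℂ} (hY1 : ∀ j ω, ‖Y j ω‖ ≤ 1)
    (hYF : ∀ i j, i < j → StronglyMeasurable[F j] (Y i))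
    (hYG : ∀ j, StronglyMeasurable[G j] (Y j)) (k : ℕ) :
    ‖∫ ω, ∏ i ∈ Finset.range k, Y i ω ∂P - ∏ i ∈ Finset.range k, ∫ ω, Y i ω ∂P‖ ≤
      k * (8 * a) := by
  induction k with
  | zero => simp
  | succ k ih =>
    rcases k.eq_zero_or_pos with rfl | hk
    · simpa using ha0
    have hprod1 (ω : Ω) : ‖∏ i ∈ Finset.range k, Y i ω‖ ≤ 1 := by
      rw [norm_prod]
      exact Finset.prod_le_one (fun _ _ => norm_nonneg _) fun i _ => hY1 i ω
    have hstep := (ha k hk).norm_integral_mul_sub_le (hF k) (hG k)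
      (Finset.stronglyMeasurable_fun_prod _ fun i hi => hYF i k (Finset.mem_range.1 hi))
      hprod1 (hYG k) (hY1 k)
    have hYk : ‖∫ ω, Y k ω ∂P‖ ≤ 1 := by
      simpa using norm_integral_le_of_norm_le_const (μ := P) (ae_of_all _ (hY1 k))
    have hind : ‖(∫ ω, ∏ i ∈ Finset.range k, Y i ω ∂P) * ∫ ω, Y k ω ∂P -
        (∏ i ∈ Finset.range k, ∫ ω, Y i ω ∂P) * ∫ ω, Y k ω ∂P‖ ≤ k * (8 * a) := by
      rw [← sub_mul, norm_mul]
      exact (mul_le_of_le_one_right (norm_nonneg _) hYk).trans ih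
    simp only [Finset.prod_range_succ]
    refine (norm_sub_le_norm_sub_add_norm_sub _ _ _).trans ((add_le_add hstep hind).trans_eq ?_)
    push_cast
    ring

end StrongMixing

section MixingCoefficient

variable {Ω : Type*} {d : ℕ} {X : ℕ → Ω → (Fin d → ℝ)}

/-- The σ-algebra `σ(X₁, …, X_k)` of the past up to time `k`. -/
abbrev pastAlgebra (X : ℕ → Ω → (Fin d → ℝ)) (k : ℕ) : MeasurableSpace Ω :=
  ⨆ i ∈ Set.Icc 1 k, MeasurableSpace.comap (X i) inferInstance

/-- The σ-algebra `σ(X_k, X_{k+1}, …)` of the future from time `k` on. -/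
abbrev futureAlgebra (X : ℕ → Ω → (Fin d → ℝ)) (k : ℕ) : MeasurableSpace Ω :=
  ⨆ i ∈ Set.Ici k, MeasurableSpace.comap (X i) inferInstance

theorem measurable_pastAlgebra {i k : ℕ} (hi : 1 ≤ i) (hik : i ≤ k) :
    Measurable[pastAlgebra X k] (X i) :=
  (comap_measurable (X i)).mono (le_iSup₂_of_le (f := fun j (_ : j ∈ Set.Icc 1 k) =>
    MeasurableSpace.comap (X j) inferInstance) i ⟨hi, hik⟩ le_rfl) le_rfl

theorem measurable_futureAlgebra {i k : ℕ} (hki : k ≤ i) : Measurable[futureAlgebra X k] (X i) :=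
  (comap_measurable (X i)).mono (le_iSup₂_of_le (f := fun j (_ : j ∈ Set.Ici k) =>
    MeasurableSpace.comap (X j) inferInstance) i hki le_rfl) le_rfl

variable [m0 : MeasurableSpace Ω]

theorem pastAlgebra_le (hX : ∀ i, Measurable (X i)) (k : ℕ) : pastAlgebra X k ≤ m0 :=
  iSup₂_le fun i _ => (hX i).comap_le

theorem futureAlgebra_le (hX : ∀ i, Measurable (X i)) (k : ℕ) : futureAlgebra X k ≤ m0 :=
  iSup₂_le fun i _ => (hX i).comap_le

variable {P : Measure Ω} [IsProbabilityMeasure P]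

theorem abs_measureReal_inter_sub_le_one (A B : Set Ω) :
    |P.real (A ∩ B) - P.real A * P.real B| ≤ 1 :=
  abs_sub_le_of_nonneg_of_le measureReal_nonneg measureReal_le_one
    (mul_nonneg measureReal_nonneg measureReal_nonneg)
    (mul_le_one₀ measureReal_le_one measureReal_nonneg measureReal_le_one)

theorem isAlphaMixing_alphaMix {k : ℕ} (hk : 1 ≤ k) (m : ℕ) :
    IsAlphaMixing (pastAlgebra X k) (futureAlgebra X (k + m)) P (alphaMix P X m) := by
  intro A B hA hB
  refine le_csSup ⟨1, ?_⟩ ⟨k, hk, A, B, hA, hB, rfl⟩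
  rintro r ⟨k, -, A, B, -, -, rfl⟩
  exact abs_measureReal_inter_sub_le_one A B

theorem alphaMix_nonneg (m : ℕ) : 0 ≤ alphaMix P X m :=
  (abs_nonneg _).trans (isAlphaMixing_alphaMix le_rfl m ∅ ∅ (@MeasurableSet.empty _ (_))
    (@MeasurableSet.empty _ (_)))

theorem exists_alphaMix_le_mul_rpow {ν : ℝ}
    (h : (fun m : ℕ => alphaMix P X m) =O[atTop] fun m : ℕ => (m : ℝ) ^ (-ν)) :
    ∃ C > 0, ∀ m : ℕ, 1 ≤ m → alphaMix P X m ≤ C * (m : ℝ) ^ (-ν) := by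
  obtain ⟨C, hC, hbound⟩ := bound_of_isBigO_nat_atTop h
  refine ⟨C, hC, fun m hm => ?_⟩
  have hm' : (0 : ℝ) < (m : ℝ) ^ (-ν) := rpow_pos_of_pos (Nat.cast_pos.2 hm) _
  simpa only [norm_of_nonneg (alphaMix_nonneg m), norm_of_nonneg hm'.le] using hbound hm'.ne'

end MixingCoefficient

section LocalDependence

open scoped ENNReal

theorem lintegral_rpow_le_rpow_sub_one {E : Type*} [MeasurableSpace E] {ν : Measure E}
    {k : E → ℝ≥0∞} (hk : Measurable k) {M : ℝ≥0∞} (hM : ∀ᵐ x ∂ν, k x ≤ M)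
    (hk1 : ∫⁻ x, k x ∂ν ≤ 1) {q : ℝ} (hq : 1 ≤ q) : ∫⁻ x, k x ^ q ∂ν ≤ M ^ (q - 1) := by
  have hq0 : 0 ≤ q - 1 := sub_nonneg.2 hq
  calc ∫⁻ x, k x ^ q ∂ν ≤ ∫⁻ x, M ^ (q - 1) * k x ∂ν := by
        refine lintegral_mono_ae ?_
        filter_upwards [hM] with x hx
        calc k x ^ q = k x ^ (q - 1) * k x := by
              simpa using ENNReal.rpow_add_of_nonneg (x := k x) (q - 1) 1 hq0 zero_le_one
          _ ≤ M ^ (q - 1) * k x := by gcongr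
    _ = M ^ (q - 1) * ∫⁻ x, k x ∂ν := lintegral_const_mul _ hk
    _ ≤ M ^ (q - 1) := mul_le_of_le_one_right' hk1

theorem lintegral_mul_prod_le_mul_rpow {E : Type*} [MeasurableSpace E] {ν : Measure E}
    [SFinite ν] {k : E → ℝ≥0∞} (hk : Measurable k) {M : ℝ≥0∞} (hM : ∀ᵐ x ∂ν, k x ≤ M)
    (hk1 : ∫⁻ x, k x ∂ν ≤ 1) {p : ℝ} (hp : 1 < p) {a : E × E → ℝ≥0∞}
    (ha : AEMeasurable a (ν.prod ν)) :
    ∫⁻ z, a z * (k z.1 * k z.2) ∂(ν.prod ν) ≤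
      (∫⁻ z, a z ^ p ∂(ν.prod ν)) ^ (1 / p) * M ^ (2 / p) := by
  set q := p.conjExponent
  have hpq : p.HolderConjugate q := Real.HolderConjugate.conjExponent hp
  have hq : 1 < q := hpq.symm.lt
  have hkk : ∫⁻ z, (k z.1 * k z.2) ^ q ∂(ν.prod ν) ≤ M ^ (2 * (q - 1)) := by
    calc ∫⁻ z, (k z.1 * k z.2) ^ q ∂(ν.prod ν)
        = ∫⁻ z, k z.1 ^ q * k z.2 ^ q ∂(ν.prod ν) :=
          lintegral_congr fun z => ENNReal.mul_rpow_of_nonneg _ _ (by linarith)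
      _ = (∫⁻ x, k x ^ q ∂ν) * ∫⁻ x, k x ^ q ∂ν :=
          lintegral_prod_mul (hk.pow_const _).aemeasurable (hk.pow_const _).aemeasurable
      _ ≤ M ^ (q - 1) * M ^ (q - 1) := by
          gcongr <;> exact lintegral_rpow_le_rpow_sub_one hk hM hk1 hq.le
      _ = M ^ (2 * (q - 1)) := by
          rw [← ENNReal.rpow_add_of_nonneg _ _ (by linarith) (by linarith), two_mul]
  have hexp : 2 * (q - 1) * (1 / q) = 2 / p := by
    have hinv := hpq.inv_add_inv_eq_one
    have := hpq.pos
    have := hpq.symm.pos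
    field_simp at hinv ⊢
    linarith
  calc ∫⁻ z, a z * (k z.1 * k z.2) ∂(ν.prod ν)
      ≤ (∫⁻ z, a z ^ p ∂(ν.prod ν)) ^ (1 / p) *
          (∫⁻ z, (k z.1 * k z.2) ^ q ∂(ν.prod ν)) ^ (1 / q) :=
        ENNReal.lintegral_mul_le_Lp_mul_Lq _ hpq ha (by fun_prop)
    _ ≤ (∫⁻ z, a z ^ p ∂(ν.prod ν)) ^ (1 / p) * (M ^ (2 * (q - 1))) ^ (1 / q) := by gcongr
    _ = (∫⁻ z, a z ^ p ∂(ν.prod ν)) ^ (1 / p) * M ^ (2 / p) := by rw [← ENNReal.rpow_mul, hexp]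

theorem withDensity_ofReal_le_add {E : Type*} [MeasurableSpace E] {μ : Measure E} {q r : E → ℝ}
    (h : AEMeasurable (fun x => |q x - r x|) μ) :
    μ.withDensity (fun x => ENNReal.ofReal (q x)) ≤
      μ.withDensity (fun x => ENNReal.ofReal (r x)) +
        μ.withDensity (fun x => ENNReal.ofReal |q x - r x|) := by
  refine Measure.le_iff.2 fun A hA => ?_
  simp only [Measure.add_apply, withDensity_apply _ hA]
  rw [← lintegral_add_right' _ h.ennreal_ofReal.restrict]
  refine lintegral_mono fun x => (ENNReal.ofReal_le_ofReal ?_).trans ENNReal.ofReal_add_le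
  linarith [le_abs_self (q x - r x)]

theorem integral_le_integral_add_of_le_add {E : Type*} [MeasurableSpace E] {μ ρ η : Measure E}
    (h : μ ≤ ρ + η) {φ : E → ℝ} (hμ : Integrable φ μ) (hρ : Integrable φ ρ)
    (hμ0 : 0 ≤ᵐ[μ] φ) (hρ0 : 0 ≤ᵐ[ρ] φ) {c : ℝ} (hc : 0 ≤ c)
    (hη : ∫⁻ x, ENNReal.ofReal (φ x) ∂η ≤ ENNReal.ofReal c) :
    ∫ x, φ x ∂μ ≤ ∫ x, φ x ∂ρ + c := by
  have hρ_nonneg := integral_nonneg_of_ae hρ0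
  rw [← ENNReal.ofReal_le_ofReal_iff (by positivity), ENNReal.ofReal_add hρ_nonneg hc,
    ofReal_integral_eq_lintegral_ofReal hμ hμ0, ofReal_integral_eq_lintegral_ofReal hρ hρ0]
  calc ∫⁻ x, ENNReal.ofReal (φ x) ∂μ
      ≤ ∫⁻ x, ENNReal.ofReal (φ x) ∂(ρ + η) := lintegral_mono' h le_rfl
    _ = ∫⁻ x, ENNReal.ofReal (φ x) ∂ρ + ∫⁻ x, ENNReal.ofReal (φ x) ∂η := lintegral_add_measure ..
    _ ≤ ∫⁻ x, ENNReal.ofReal (φ x) ∂ρ + ENNReal.ofReal c := by gcongr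

theorem aemeasurable_abs_of_integrable_rpow {E : Type*} [MeasurableSpace E] {μ : Measure E}
    {h : E → ℝ} {p : ℝ} (hp : p ≠ 0) (hh : Integrable (fun x => |h x| ^ p) μ) :
    AEMeasurable (fun x => |h x|) μ := by
  simpa [← Real.rpow_mul, hp] using hh.aestronglyMeasurable.aemeasurable.pow_const p⁻¹

variable {E : Type*} [MeasurableSpace E] {ν : Measure E} [SFinite ν] {f g k : E → ℝ}
  {q : E × E → ℝ} {p C M : ℝ}

theorem lintegral_mul_withDensity_abs_le (hk : Measurable k) (hk0 : 0 ≤ᵐ[ν] k)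
    (hM0 : 0 ≤ M) (hM : ∀ᵐ x ∂ν, k x ≤ M) (hk1 : ∫⁻ x, ENNReal.ofReal (k x) ∂ν ≤ 1)
    (hp : 1 < p) (hq : Integrable (fun z => |q z| ^ p) (ν.prod ν))
    (hC : (∫ z, |q z| ^ p ∂(ν.prod ν)) ^ (1 / p) ≤ C) :
    ∫⁻ z, ENNReal.ofReal (k z.1 * k z.2) ∂(ν.prod ν).withDensity (fun z => ENNReal.ofReal |q z|) ≤
      ENNReal.ofReal (C * M ^ (2 / p)) := by
  have hp0 : 0 < p := by linarith
  have hC0 : 0 ≤ C := le_trans (by positivity) hC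
  have hqm := aemeasurable_abs_of_integrable_rpow hp0.ne' hq
  have hnorm : (∫⁻ z, ENNReal.ofReal |q z| ^ p ∂(ν.prod ν)) ^ (1 / p) ≤ ENNReal.ofReal C := by
    simp only [ENNReal.ofReal_rpow_of_nonneg (abs_nonneg (q _)) hp0.le]
    rw [← ofReal_integral_eq_lintegral_ofReal hq (ae_of_all _ fun z => by positivity),
      ENNReal.ofReal_rpow_of_nonneg (by positivity) (by positivity)]
    exact ENNReal.ofReal_le_ofReal hC
  rw [lintegral_withDensity_eq_lintegral_mul₀ hqm.ennreal_ofReal (by fun_prop)]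
  calc ∫⁻ z, ENNReal.ofReal |q z| * ENNReal.ofReal (k z.1 * k z.2) ∂(ν.prod ν)
      = ∫⁻ z, ENNReal.ofReal |q z| * (ENNReal.ofReal (k z.1) * ENNReal.ofReal (k z.2))
          ∂(ν.prod ν) := by
        refine lintegral_congr_ae ?_
        filter_upwards [Measure.quasiMeasurePreserving_fst.ae hk0] with z hz
        rw [ENNReal.ofReal_mul hz]
    _ ≤ (∫⁻ z, ENNReal.ofReal |q z| ^ p ∂(ν.prod ν)) ^ (1 / p) * ENNReal.ofReal M ^ (2 / p) :=
        lintegral_mul_prod_le_mul_rpow hk.ennreal_ofReal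
          (hM.mono fun _ => ENNReal.ofReal_le_ofReal) hk1 hp hqm.ennreal_ofReal
    _ ≤ ENNReal.ofReal C * ENNReal.ofReal M ^ (2 / p) := by gcongr
    _ = ENNReal.ofReal (C * M ^ (2 / p)) := by
        rw [ENNReal.ofReal_mul hC0, ENNReal.ofReal_rpow_of_nonneg hM0 (by positivity)]

theorem prod_withDensity_ofReal (hf : Measurable f) (hf0 : 0 ≤ᵐ[ν] f) (hg : Measurable g) :
    (ν.withDensity fun x => ENNReal.ofReal (f x)).prod
        (ν.withDensity fun x => ENNReal.ofReal (g x)) =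
      (ν.prod ν).withDensity fun z => ENNReal.ofReal (f z.1 * g z.2) := by
  rw [prod_withDensity hf.ennreal_ofReal hg.ennreal_ofReal]
  refine withDensity_congr_ae ?_
  filter_upwards [Measure.quasiMeasurePreserving_fst.ae hf0] with z hz
  exact (ENNReal.ofReal_mul hz).symm

theorem cov_comp_eq_integral_map_sub {Ω : Type*} [MeasurableSpace Ω] {P : Measure Ω} [SFinite P]
    {Y Z : Ω → E} (hY : Measurable Y) (hZ : Measurable Z) (hk : Measurable k) :
    cov P (fun ω => k (Y ω)) (fun ω => k (Z ω)) =
      ∫ z, k z.1 * k z.2 ∂P.map (fun ω => (Y ω, Z ω)) -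
        ∫ z, k z.1 * k z.2 ∂(P.map Y).prod (P.map Z) := by
  rw [integral_prod_mul, cov, integral_map hY.aemeasurable hk.aestronglyMeasurable,
    integral_map hZ.aemeasurable hk.aestronglyMeasurable,
    integral_map (hY.prodMk hZ).aemeasurable (Measurable.aestronglyMeasurable (by fun_prop))]

theorem abs_cov_le_mul_rpow_of_withDensity {Ω : Type*} [MeasurableSpace Ω] {P : Measure Ω}
    [IsProbabilityMeasure P] {Y Z : Ω → E} (hY : Measurable Y) (hZ : Measurable Z)
    (hf : Measurable f) (hf0 : 0 ≤ᵐ[ν] f) (hg : Measurable g)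
    (hYf : P.map Y = ν.withDensity fun x => ENNReal.ofReal (f x))
    (hZg : P.map Z = ν.withDensity fun x => ENNReal.ofReal (g x))
    (hYZ : P.map (fun ω => (Y ω, Z ω)) = (ν.prod ν).withDensity fun z => ENNReal.ofReal (q z))
    (hk : Measurable k) (hk0 : 0 ≤ᵐ[ν] k) (hM0 : 0 ≤ M) (hM : ∀ᵐ x ∂ν, k x ≤ M)
    (hk1 : ∫⁻ x, ENNReal.ofReal (k x) ∂ν ≤ 1) (hp : 1 < p)
    (hq : Integrable (fun z => |q z - f z.1 * g z.2| ^ p) (ν.prod ν))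
    (hC : (∫ z, |q z - f z.1 * g z.2| ^ p ∂(ν.prod ν)) ^ (1 / p) ≤ C) :
    |cov P (fun ω => k (Y ω)) (fun ω => k (Z ω))| ≤ C * M ^ (2 / p) := by
  have hC0 : 0 ≤ C := le_trans (by positivity) hC
  have hqm := aemeasurable_abs_of_integrable_rpow (by linarith) hq
  have hη := lintegral_mul_withDensity_abs_le hk hk0 hM0 hM hk1 hp hq hC
  have : IsProbabilityMeasure (P.map Y) := Measure.isProbabilityMeasure_map hY.aemeasurable
  have : IsProbabilityMeasure (P.map Z) := Measure.isProbabilityMeasure_map hZ.aemeasurable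
  have : IsProbabilityMeasure (P.map fun ω => (Y ω, Z ω)) :=
    Measure.isProbabilityMeasure_map (hY.prodMk hZ).aemeasurable
  have hprod : (P.map Y).prod (P.map Z) =
      (ν.prod ν).withDensity fun z => ENNReal.ofReal (f z.1 * g z.2) := by
    rw [hYf, hZg, prod_withDensity_ofReal hf hf0 hg]
  have hkk : ∀ᵐ z ∂ν.prod ν, 0 ≤ k z.1 * k z.2 ∧ ‖k z.1 * k z.2‖ ≤ M * M := by
    filter_upwards [Measure.quasiMeasurePreserving_fst.ae (hk0.and hM),
      Measure.quasiMeasurePreserving_snd.ae (hk0.and hM)] with z ⟨h10, h1M⟩ ⟨h20, h2M⟩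
    have h0 := mul_nonneg h10 h20
    exact ⟨h0, by rw [Real.norm_of_nonneg h0]; gcongr⟩
  have hint {ρ : Measure (E × E)} [IsProbabilityMeasure ρ] (hρ : ρ ≪ ν.prod ν) :
      Integrable (fun z => k z.1 * k z.2) ρ ∧ 0 ≤ᵐ[ρ] fun z => k z.1 * k z.2 :=
    ⟨.of_bound (Measurable.aestronglyMeasurable (by fun_prop)) (M * M)
      (hρ.ae_le (hkk.mono fun _ h => h.2)), hρ.ae_le (hkk.mono fun _ h => h.1)⟩
  obtain ⟨hJi, hJ0⟩ := hint (hYZ ▸ withDensity_absolutelyContinuous _ _)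
  obtain ⟨hQi, hQ0⟩ := hint (hprod ▸ withDensity_absolutelyContinuous _ _)
  have hCM : 0 ≤ C * M ^ (2 / p) := by positivity
  have hJQ := integral_le_integral_add_of_le_add
    (by rw [hYZ, hprod]; exact withDensity_ofReal_le_add hqm) hJi hQi hJ0 hQ0 hCM hη
  simp only [abs_sub_comm (q _)] at hqm hη
  have hQJ := integral_le_integral_add_of_le_add
    (by rw [hYZ, hprod]; exact withDensity_ofReal_le_add hqm) hQi hJi hQ0 hJ0 hCM hη
  rw [cov_comp_eq_integral_map_sub hY hZ hk, abs_le]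
  constructor <;> linarith

end LocalDependence

section SimplexSample

/-- The standing assumptions on the observations: `X₁, X₂, …` are `S_d`-valued random vectors with
common marginal density `f`. As in `AssumpA2`, the law of `X₀` is left unconstrained. -/
structure IsSimplexSample {Ω : Type*} [MeasurableSpace Ω] (P : Measure Ω) {d : ℕ}
    (X : ℕ → Ω → (Fin d → ℝ)) (f : (Fin d → ℝ) → ℝ) : Prop where
  measurable : ∀ i, Measurable (X i)
  mem_Sd : ∀ i ω, X i ω ∈ Sd d
  measurable_density : Measurable f
  map_eq : ∀ i, 1 ≤ i → P.map (X i) = volume.withDensity fun x => ENNReal.ofReal (f x)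

variable {Ω : Type*} [MeasurableSpace Ω] {P : Measure Ω} {d : ℕ} {X : ℕ → Ω → (Fin d → ℝ)}
  {f : (Fin d → ℝ) → ℝ} {s : Fin d → ℝ} {b M p : ℝ} {i j : ℕ}

namespace IsSimplexSample

theorem of_continuousOn (hmeas : ∀ i, Measurable (X i))
    (hval : ∀ i ω, X i ω ∈ Sd d)
    (hlaw : ∀ i, 1 ≤ i → P.map (X i) = volume.withDensity fun x => ENNReal.ofReal (f x))
    (hsupp : ∀ x, x ∉ Sd d → f x = 0) (hf : ContinuousOn f (Sd d)) : IsSimplexSample P X f where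
  measurable := hmeas
  mem_Sd := hval
  measurable_density := by
    refine measurable_of_restrict_of_restrict_compl measurableSet_Sd
      (continuousOn_iff_continuous_domRestrict.1 hf).measurable ?_
    have hzero : (Sd d)ᶜ.domRestrict f = fun _ => 0 := funext fun x => hsupp x x.2
    exact hzero ▸ measurable_const
  map_eq := hlaw

theorem integral_comp (hX : IsSimplexSample P X f) (hi : 1 ≤ i) {g : (Fin d → ℝ) → ℝ}
    (hg : Measurable g) : ∫ ω, g (X i ω) ∂P = ∫ x in Sd d, g x * max (f x) 0 := by
  have hmem : ∀ᵐ x ∂P.map (X i), x ∈ Sd d :=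
    (ae_map_iff (hX.measurable i).aemeasurable measurableSet_Sd).2 (ae_of_all _ (hX.mem_Sd i))
  rw [← integral_map (hX.measurable i).aemeasurable hg.aestronglyMeasurable,
    ← Measure.restrict_eq_self_of_ae_mem hmem, hX.map_eq i hi,
    restrict_withDensity measurableSet_Sd,
    integral_withDensity_eq_integral_toReal_smul hX.measurable_density.ennreal_ofReal
      (ae_of_all _ fun _ => ENNReal.ofReal_lt_top)]
  simp only [smul_eq_mul, ENNReal.toReal_ofReal', mul_comm]

theorem ae_mem_Sd_inter_pos (hX : IsSimplexSample P X f) (hi : 1 ≤ i) :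
    ∀ᵐ ω ∂P, X i ω ∈ Sd d ∩ {x | 0 < f x} := by
  have hpos : ∀ᵐ x ∂P.map (X i), 0 < f x := by
    rw [hX.map_eq i hi, ae_withDensity_iff hX.measurable_density.ennreal_ofReal]
    exact ae_of_all _ fun x hx => ENNReal.ofReal_pos.1 (pos_iff_ne_zero.2 hx)
  filter_upwards [ae_of_ae_map (hX.measurable i).aemeasurable hpos] with ω hω
    using ⟨hX.mem_Sd i ω, hω⟩

theorem measurableSet_Sd_inter_pos (hX : IsSimplexSample P X f) :
    MeasurableSet (Sd d ∩ {x | 0 < f x}) :=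
  measurableSet_Sd.inter (measurableSet_lt measurable_const hX.measurable_density)

theorem map_eq_restrict (hX : IsSimplexSample P X f) (hi : 1 ≤ i) :
    P.map (X i) = (volume.restrict (Sd d ∩ {x | 0 < f x})).withDensity
      fun x => ENNReal.ofReal (f x) := by
  have hT := hX.measurableSet_Sd_inter_pos
  rw [← restrict_withDensity hT, ← hX.map_eq i hi, Measure.restrict_eq_self_of_ae_mem]
  exact (ae_map_iff (hX.measurable i).aemeasurable hT).2 (hX.ae_mem_Sd_inter_pos hi)

theorem map_prodMk_eq_restrict (hX : IsSimplexSample P X f) (hi : 1 ≤ i) (hj : 1 ≤ j)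
    {q : (Fin d → ℝ) × (Fin d → ℝ) → ENNReal}
    (hq : P.map (fun ω => (X i ω, X j ω)) = volume.withDensity q) :
    P.map (fun ω => (X i ω, X j ω)) =
      (volume.restrict ((Sd d ∩ {x | 0 < f x}) ×ˢ (Sd d ∩ {x | 0 < f x}))).withDensity q := by
  have hT := hX.measurableSet_Sd_inter_pos.prod hX.measurableSet_Sd_inter_pos
  rw [← restrict_withDensity hT, ← hq, Measure.restrict_eq_self_of_ae_mem]
  refine (ae_map_iff ((hX.measurable i).prodMk (hX.measurable j)).aemeasurable hT).2 ?_
  filter_upwards [hX.ae_mem_Sd_inter_pos hi, hX.ae_mem_Sd_inter_pos hj] with ω hωi hωj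
    using ⟨hωi, hωj⟩

theorem tendsto_integral_kappa (hX : IsSimplexSample P X f) (hs : s ∈ SdInt d)
    (hM : ∀ x ∈ Sd d, |f x| ≤ M) (hfs : ContinuousWithinAt f (Sd d) s) (hi : 1 ≤ i) :
    Tendsto (fun b => ∫ ω, kappa d s b (X i ω) ∂P) (𝓝[>] 0) (𝓝 (max (f s) 0)) := by
  simp only [hX.integral_comp hi measurable_kappa]
  exact tendsto_integral_kappa_mul hs
    (hX.measurable_density.max measurable_const).aestronglyMeasurable
    (fun x hx => (abs_max_le_max_abs_abs.trans_eq (by simp)).trans (hM x hx))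
    (hfs.max continuousWithinAt_const)

theorem tendsto_rpow_mul_integral_kappa_sq (hX : IsSimplexSample P X f) (hs : s ∈ SdInt d)
    (hM : ∀ x ∈ Sd d, |f x| ≤ M) (hfs : ContinuousWithinAt f (Sd d) s) (hi : 1 ≤ i) :
    Tendsto (fun b => b ^ ((d : ℝ) / 2) * ∫ ω, kappa d s b (X i ω) ^ 2 ∂P) (𝓝[>] 0)
      (𝓝 (psiFun d s * max (f s) 0)) := by
  simp only [hX.integral_comp hi (g := fun x => kappa d s _ x ^ 2) (measurable_kappa.pow_const 2)]
  exact tendsto_rpow_mul_integral_kappa_sq_mul hs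
    (hX.measurable_density.max measurable_const).aestronglyMeasurable
    (fun x hx => (abs_max_le_max_abs_abs.trans_eq (by simp)).trans (hM x hx))
    (hfs.max continuousWithinAt_const)

variable [IsProbabilityMeasure P]

theorem memLp_kappa (hX : IsSimplexSample P X f) (hs : s ∈ SdInt d) (hb : 0 < b) (i : ℕ) :
    MemLp (fun ω => kappa d s b (X i ω)) 2 P :=
  memLp_of_bounded (a := 0) (b := kappa d s b s)
    (ae_of_all _ fun ω => ⟨kappa_nonneg hs hb (hX.mem_Sd i ω),
      kappa_le_kappa_self hs hb (hX.mem_Sd i ω)⟩)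
    (measurable_kappa.comp (hX.measurable i)).aestronglyMeasurable 2

theorem tendsto_rpow_mul_variance_kappa (hX : IsSimplexSample P X f) (hd : 1 ≤ d)
    (hs : s ∈ SdInt d) (hM : ∀ x ∈ Sd d, |f x| ≤ M) (hfs : ContinuousWithinAt f (Sd d) s)
    (hi : 1 ≤ i) :
    Tendsto (fun b => b ^ ((d : ℝ) / 2) *
        ProbabilityTheory.variance (fun ω => kappa d s b (X i ω)) P) (𝓝[>] 0)
      (𝓝 (psiFun d s * max (f s) 0)) := by
  have hd2 : 0 < (d : ℝ) / 2 := half_pos (Nat.cast_pos.2 hd)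
  have hlim := (hX.tendsto_rpow_mul_integral_kappa_sq hs hM hfs hi).sub
    (((tendsto_id.mono_left nhdsWithin_le_nhds).rpow_const_nhds_zero hd2).mul
      ((hX.tendsto_integral_kappa hs hM hfs hi).pow 2))
  rw [zero_mul, sub_zero] at hlim
  refine hlim.congr' (eventually_nhdsWithin_of_forall fun b hb => ?_)
  beta_reduce
  rw [ProbabilityTheory.variance_eq_sub (hX.memLp_kappa hs hb i), mul_sub]
  rfl

theorem variance_kappa_eq (hX : IsSimplexSample P X f) (hs : s ∈ SdInt d) (hb : 0 < b)
    (hi : 1 ≤ i) (hj : 1 ≤ j) :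
    ProbabilityTheory.variance (fun ω => kappa d s b (X i ω)) P =
      ProbabilityTheory.variance (fun ω => kappa d s b (X j ω)) P := by
  rw [ProbabilityTheory.variance_eq_sub (hX.memLp_kappa hs hb i),
    ProbabilityTheory.variance_eq_sub (hX.memLp_kappa hs hb j),
    hX.integral_comp hi measurable_kappa, hX.integral_comp hj measurable_kappa]
  simp only [Pi.pow_apply, hX.integral_comp hi (measurable_kappa.pow_const 2),
    hX.integral_comp hj (measurable_kappa.pow_const 2)]

theorem exists_abs_cov_le_mul_rpow (hX : IsSimplexSample P X f) (hp : 1 < p)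
    (hA2 : AssumpA2 P X f p) : ∃ C > 0, ∀ (k : (Fin d → ℝ) → ℝ) (M : ℝ), Measurable k → 0 ≤ M →
      (∀ x ∈ Sd d, 0 ≤ k x) → (∀ x ∈ Sd d, k x ≤ M) → ∫⁻ x in Sd d, ENNReal.ofReal (k x) ≤ 1 →
      ∀ i j, 1 ≤ i → 1 ≤ j → i ≠ j →
        |cov P (fun ω => k (X i ω)) (fun ω => k (X j ω))| ≤ C * M ^ (2 / p) := by
  obtain ⟨fpair, hpair, hint, C, hC⟩ := hA2
  refine ⟨max C 1, by positivity, fun k M hk hM hk0 hkM hk1 i j hi hj hij => ?_⟩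
  set T : Set (Fin d → ℝ) := Sd d ∩ {x | 0 < f x}
  have hT : MeasurableSet T := hX.measurableSet_Sd_inter_pos
  have hTS : T ⊆ Sd d := Set.inter_subset_left
  have hprod : (volume.restrict T).prod (volume.restrict T) = volume.restrict (T ×ˢ T) := by
    rw [Measure.prod_restrict, Measure.volume_eq_prod]
  have hsub : T ×ˢ T ⊆ Sd d ×ˢ Sd d := Set.prod_mono hTS hTS
  refine abs_cov_le_mul_rpow_of_withDensity (hX.measurable i) (hX.measurable j)
    hX.measurable_density (ae_restrict_of_forall_mem hT fun x hx => hx.2.le) hX.measurable_density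
    (hX.map_eq_restrict hi) (hX.map_eq_restrict hj)
    (hprod ▸ hX.map_prodMk_eq_restrict hi hj (hpair i j hi hj hij)) hk
    (ae_restrict_of_forall_mem hT fun x hx => hk0 x (hTS hx)) hM
    (ae_restrict_of_forall_mem hT fun x hx => hkM x (hTS hx))
    ((lintegral_mono_set hTS).trans hk1) hp ?_ ?_
  · rw [hprod]
    exact (hint i j hi hj hij).mono_measure (Measure.restrict_mono hsub le_rfl)
  · rw [hprod]
    refine (rpow_le_rpow (integral_nonneg fun z => by positivity) (setIntegral_mono_set
      (hint i j hi hj hij) (ae_of_all _ fun z => by positivity) hsub.eventuallyLE)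
      (by positivity)).trans ((hC i j hi hj hij).trans (le_max_left _ _))

theorem abs_cov_le_mul_alphaMix (hX : IsSimplexSample P X f) {k : (Fin d → ℝ) → ℝ}
    (hk : Measurable k) (hkM : ∀ x ∈ Sd d, |k x| ≤ M) (hi : 1 ≤ i) (m : ℕ) :
    |cov P (fun ω => k (X i ω)) (fun ω => k (X (i + m) ω))| ≤ 4 * (M * M) * alphaMix P X m :=
  (isAlphaMixing_alphaMix hi m).abs_cov_le (pastAlgebra_le hX.measurable i)
    (futureAlgebra_le hX.measurable (i + m))
    (hk.comp (measurable_pastAlgebra hi le_rfl)).stronglyMeasurable (fun ω => hkM _ (hX.mem_Sd i ω))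
    (hk.comp (measurable_futureAlgebra le_rfl)).stronglyMeasurable (fun ω => hkM _ (hX.mem_Sd _ ω))

end IsSimplexSample

end SimplexSample

section VarianceSum

open ProbabilityTheory

variable {Ω : Type*} [MeasurableSpace Ω] {P : Measure Ω} [IsFiniteMeasure P] {Y : ℕ → Ω → ℝ}
  {V : ℝ} {g : ℕ → ℝ}

theorem abs_covariance_sum_range_le_tsum (hY : ∀ i, MemLp (Y i) 2 P) (hg : ∀ m, 0 ≤ g m)
    (hgs : Summable g)
    (hcov : ∀ i m, 1 ≤ m → |covariance (Y i) (Y (i + m)) P| ≤ g m) (n : ℕ) :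
    |covariance (fun ω => ∑ i ∈ Finset.range n, Y i ω) (Y n) P| ≤ ∑' m, g m := by
  rw [covariance_fun_sum_left' (fun i _ => hY i) (hY n), ← Finset.sum_range_reflect]
  calc |∑ m ∈ Finset.range n, covariance (Y (n - 1 - m)) (Y n) P|
      ≤ ∑ m ∈ Finset.range n, g (m + 1) := by
        refine (Finset.abs_sum_le_sum_abs _ _).trans (Finset.sum_le_sum fun m hm => ?_)
        have hm' : n - 1 - m + (m + 1) = n := by grind
        simpa only [hm'] using hcov (n - 1 - m) (m + 1) m.succ_pos
    _ ≤ ∑' m, g (m + 1) :=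
        ((summable_nat_add_iff 1).2 hgs).sum_le_tsum _ fun _ _ => hg _
    _ ≤ ∑' m, g m := by
        rw [hgs.tsum_eq_zero_add]
        exact le_add_of_nonneg_left (hg 0)

theorem abs_variance_sum_range_sub_le (hY : ∀ i, MemLp (Y i) 2 P) (hV : ∀ i, variance (Y i) P = V)
    (hg : ∀ m, 0 ≤ g m) (hgs : Summable g)
    (hcov : ∀ i m, 1 ≤ m → |covariance (Y i) (Y (i + m)) P| ≤ g m) (n : ℕ) :
    |variance (fun ω => ∑ i ∈ Finset.range n, Y i ω) P - n * V| ≤ n * (2 * ∑' m, g m) := by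
  induction n with
  | zero => simp [← Pi.zero_def]
  | succ n ih =>
    have hstep := variance_fun_add (memLp_finsetSum _ fun i (_ : i ∈ Finset.range n) => hY i) (hY n)
    have hcovn := abs_covariance_sum_range_le_tsum hY hg hgs hcov n
    simp only [Finset.sum_range_succ, hstep, hV]
    push_cast
    rw [abs_le] at ih hcovn ⊢
    constructor <;> linarith

end VarianceSum

section BlockVariance

open ProbabilityTheory

theorem exists_interpolation_exponent {p ν : ℝ} (hp : 2 < p) (hν : 2 * (p - 1) / (p - 2) < ν) :
    ∃ θ : ℝ, 0 < θ ∧ θ < 1 ∧ 1 < ν * θ ∧ 2 / p * (1 - θ) + 2 * θ < 1 := by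
  have hpos : 0 < 2 * (p - 1) / (p - 2) := div_pos (by linarith) (by linarith)
  have hν0 : 0 < ν := hpos.trans hν
  have hlt : 1 / ν < (p - 2) / (2 * (p - 1)) := by
    rwa [one_div_lt hν0 (div_pos (by linarith) (by linarith)), one_div_div]
  obtain ⟨θ, hθν, hθp⟩ := exists_between hlt
  have hθ0 : 0 < θ := lt_trans (by positivity) hθν
  rw [div_lt_iff₀ hν0] at hθν
  rw [lt_div_iff₀ (by linarith)] at hθp
  refine ⟨θ, hθ0, by nlinarith, by linarith, ?_⟩
  rw [div_mul_eq_mul_div, ← lt_sub_iff_add_lt, div_lt_iff₀ (by linarith)]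
  nlinarith

theorem le_rpow_mul_rpow_of_le_of_le {c x y θ : ℝ} (hc : 0 ≤ c) (hx : c ≤ x) (hy : c ≤ y)
    (hθ0 : 0 < θ) (hθ1 : θ < 1) : c ≤ x ^ (1 - θ) * y ^ θ := by
  have hx0 : 0 ≤ x := hc.trans hx
  calc c = c ^ (1 - θ) * c ^ θ := by
        rw [← rpow_add_of_nonneg hc (by linarith) hθ0.le, sub_add_cancel, rpow_one]
    _ ≤ x ^ (1 - θ) * y ^ θ := by gcongr

theorem tendsto_rpow_mul_kappa_self_rpow {d : ℕ} {s : Fin d → ℝ} {t : ℝ} (hd : 1 ≤ d)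
    (hs : s ∈ SdInt d) (ht : t < 1) :
    Tendsto (fun b => b ^ ((d : ℝ) / 2) * kappa d s b s ^ t) (𝓝[>] 0) (𝓝 0) := by
  have hd2 : 0 < (d : ℝ) / 2 := half_pos (Nat.cast_pos.2 hd)
  have hb : Tendsto (fun b : ℝ => b) (𝓝[>] 0) (𝓝 0) := nhdsWithin_le_nhds
  have hlim := ((tendsto_rpow_mul_kappa_self hs).rpow_const (p := t)
    (.inl (kappaPeak_pos hs).ne')).mul
    ((hb.rpow_const_nhds_zero hd2).rpow_const_nhds_zero (sub_pos.2 ht))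
  rw [mul_zero] at hlim
  refine hlim.congr' (eventually_nhdsWithin_of_forall fun b (hb : 0 < b) => ?_)
  have hbd : 0 < b ^ ((d : ℝ) / 2) := rpow_pos_of_pos hb _
  rw [mul_rpow hbd.le (kappa_self_pos hs hb).le, mul_right_comm, ← rpow_add hbd,
    add_sub_cancel, rpow_one]

variable {Ω : Type*} [MeasurableSpace Ω] {P : Measure Ω} [IsProbabilityMeasure P] {d : ℕ}
  {X : ℕ → Ω → (Fin d → ℝ)} {f : (Fin d → ℝ) → ℝ} {s : Fin d → ℝ} {b M p ν : ℝ}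

/-- The sum of `p` consecutive centered kernel variables, starting after the index `o`. The block
variable `U_j` is `blockSum P X s b p ((j - 1) * (p + q))`. -/
noncomputable def blockSum (P : Measure Ω) (X : ℕ → Ω → (Fin d → ℝ)) (s : Fin d → ℝ) (b : ℝ)
    (p o : ℕ) (ω : Ω) : ℝ :=
  ∑ i ∈ Finset.range p, Xi P X s b (i + 1 + o) ω

namespace IsSimplexSample

-- Interpolates between the bound `M^(2/p)` of the local dependence assumption and the bound
-- `M² m^(-ν)` of the mixing assumption, where `M` is the maximum of the kernel.
theorem exists_abs_cov_kappa_le (hX : IsSimplexSample P X f) (hs : s ∈ SdInt d) (hp : 2 < p)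
    (hA2 : AssumpA2 P X f p) (hν : 2 * (p - 1) / (p - 2) < ν)
    (hα : (fun m : ℕ => alphaMix P X m) =O[atTop] fun m : ℕ => (m : ℝ) ^ (-ν)) :
    ∃ C > (0 : ℝ), ∃ t < (1 : ℝ), ∃ η > (1 : ℝ), ∀ b > 0, ∀ i m : ℕ, 1 ≤ i → 1 ≤ m →
      |cov P (fun ω => kappa d s b (X i ω)) (fun ω => kappa d s b (X (i + m) ω))| ≤
        C * kappa d s b s ^ t * (m : ℝ) ^ (-η) := by
  obtain ⟨θ, hθ0, hθ1, hθν, hθp⟩ := exists_interpolation_exponent hp hν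
  obtain ⟨A, hA, hlocal⟩ := hX.exists_abs_cov_le_mul_rpow (by linarith) hA2
  obtain ⟨B, hB, hmix⟩ := exists_alphaMix_le_mul_rpow hα
  refine ⟨A ^ (1 - θ) * (4 * B) ^ θ, by positivity, _, hθp, _, hθν, fun b hb i m hi hm => ?_⟩
  set M := kappa d s b s
  have hM : 0 < M := kappa_self_pos hs hb
  have hk0 : ∀ x ∈ Sd d, 0 ≤ kappa d s b x := fun x => kappa_nonneg hs hb
  have hkM : ∀ x ∈ Sd d, kappa d s b x ≤ M := fun x => kappa_le_kappa_self hs hb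
  have hcov1 := hlocal (kappa d s b) M measurable_kappa hM.le hk0 hkM
    (lintegral_dirK (one_lt_div_add_one_of_mem_SdInt hs hb)
      (one_lt_slack_div_add_one_of_mem_SdInt hs hb)).le i (i + m) hi (by omega) (by omega)
  have hcov2 := (hX.abs_cov_le_mul_alphaMix measurable_kappa
    (fun x hx => (abs_of_nonneg (hk0 x hx)).trans_le (hkM x hx)) hi m).trans
    (mul_le_mul_of_nonneg_left (hmix m hm) (by positivity))
  have hm0 : (0 : ℝ) ≤ m := m.cast_nonneg
  calc |cov P (fun ω => kappa d s b (X i ω)) (fun ω => kappa d s b (X (i + m) ω))|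
      ≤ (A * M ^ (2 / p)) ^ (1 - θ) * (4 * (M * M) * (B * (m : ℝ) ^ (-ν))) ^ θ :=
        le_rpow_mul_rpow_of_le_of_le (abs_nonneg _) hcov1 hcov2 hθ0 hθ1
    _ = (A * M ^ (2 / p)) ^ (1 - θ) * (4 * B * M ^ (2 : ℝ) * (m : ℝ) ^ (-ν)) ^ θ := by
        rw [rpow_two]
        ring_nf
    _ = A ^ (1 - θ) * (4 * B) ^ θ * M ^ (2 / p * (1 - θ) + 2 * θ) * (m : ℝ) ^ (-(ν * θ)) := by
        rw [mul_rpow hA.le (by positivity), mul_rpow (by positivity) (by positivity),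
          mul_rpow (by positivity) (by positivity), ← rpow_mul hM.le, ← rpow_mul hM.le,
          ← rpow_mul hm0, rpow_add hM, neg_mul]
        ring

theorem memLp_Xi (hX : IsSimplexSample P X f) (hs : s ∈ SdInt d) (hb : 0 < b) (i : ℕ) :
    MemLp (Xi P X s b i) 2 P :=
  (hX.memLp_kappa hs hb i).sub (memLp_const _)

theorem covariance_Xi (hX : IsSimplexSample P X f) (hs : s ∈ SdInt d) (hb : 0 < b) (i j : ℕ) :
    covariance (Xi P X s b i) (Xi P X s b j) P =
      cov P (fun ω => kappa d s b (X i ω)) (fun ω => kappa d s b (X j ω)) := by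
  have hint (i : ℕ) := (hX.memLp_kappa hs hb i).integrable one_le_two
  unfold Xi
  rw [covariance_sub_const_left (hint i), covariance_sub_const_right (hint j),
    covariance_eq_sub (hX.memLp_kappa hs hb i) (hX.memLp_kappa hs hb j)]
  rfl

theorem variance_Xi (hX : IsSimplexSample P X f) (hs : s ∈ SdInt d) (hb : 0 < b) {i : ℕ}
    (hi : 1 ≤ i) :
    variance (Xi P X s b i) P = variance (fun ω => kappa d s b (X 1 ω)) P := by
  unfold Xi
  rw [variance_sub_const (hX.memLp_kappa hs hb i).aestronglyMeasurable,
    hX.variance_kappa_eq hs hb hi le_rfl]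

theorem exists_tendsto_zero_abs_variance_blockSum_sub_le (hX : IsSimplexSample P X f) (hd : 1 ≤ d)
    (hs : s ∈ SdInt d) (hM : ∀ x ∈ Sd d, |f x| ≤ M) (hfs : ContinuousWithinAt f (Sd d) s)
    (hp : 2 < p) (hA2 : AssumpA2 P X f p) (hν : 2 * (p - 1) / (p - 2) < ν)
    (hα : (fun m : ℕ => alphaMix P X m) =O[atTop] fun m : ℕ => (m : ℝ) ^ (-ν)) :
    ∃ r : ℝ → ℝ, Tendsto r (𝓝[>] 0) (𝓝 0) ∧ ∀ b > 0, ∀ n o : ℕ,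
      |b ^ ((d : ℝ) / 2) * variance (blockSum P X s b n o) P - n * (psiFun d s * max (f s) 0)| ≤
        n * r b := by
  obtain ⟨C, hC, t, ht, η, hη, hcov⟩ := hX.exists_abs_cov_kappa_le hs hp hA2 hν hα
  have hsum : Summable fun m : ℕ => (m : ℝ) ^ (-η) := summable_nat_rpow.2 (neg_lt_neg hη)
  set v := psiFun d s * max (f s) 0
  set T := ∑' m : ℕ, (m : ℝ) ^ (-η)
  set V : ℝ → ℝ := fun b => variance (fun ω => kappa d s b (X 1 ω)) P
  refine ⟨fun b => 2 * C * T * (b ^ ((d : ℝ) / 2) * kappa d s b s ^ t) +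
    |b ^ ((d : ℝ) / 2) * V b - v|, ?_, fun b hb n o => ?_⟩
  · have hV : Tendsto (fun b => b ^ ((d : ℝ) / 2) * V b) (𝓝[>] 0) (𝓝 v) :=
      hX.tendsto_rpow_mul_variance_kappa hd hs hM hfs le_rfl
    simpa using ((tendsto_rpow_mul_kappa_self_rpow hd hs ht).const_mul (2 * C * T)).add
      (hV.sub_const v).abs
  have hκ := kappa_self_pos hs hb
  have hvar := abs_variance_sum_range_sub_le (P := P) (Y := fun i => Xi P X s b (i + 1 + o))
    (fun i => hX.memLp_Xi hs hb _) (fun i => hX.variance_Xi hs hb (by omega))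
    (g := fun m : ℕ => C * kappa d s b s ^ t * (m : ℝ) ^ (-η)) (fun m => by positivity)
    (hsum.mul_left _) (fun i m hm => by
      rw [hX.covariance_Xi hs hb, show i + m + 1 + o = i + 1 + o + m by ring]
      exact hcov b hb _ m (by omega) hm) n
  rw [tsum_mul_left] at hvar
  have hbd : 0 < b ^ ((d : ℝ) / 2) := rpow_pos_of_pos hb _
  calc |b ^ ((d : ℝ) / 2) * variance (blockSum P X s b n o) P - n * v|
      = |b ^ ((d : ℝ) / 2) * (variance (blockSum P X s b n o) P - n * V b) +
          n * (b ^ ((d : ℝ) / 2) * V b - v)| := by ring_nf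
    _ ≤ b ^ ((d : ℝ) / 2) * (n * (2 * (C * kappa d s b s ^ t * T))) +
          n * |b ^ ((d : ℝ) / 2) * V b - v| := by
        refine (abs_add_le _ _).trans ?_
        rw [abs_mul, abs_mul, abs_of_pos hbd, Nat.abs_cast]
        gcongr
        exact hvar
    _ = _ := by ring

end IsSimplexSample

end BlockVariance

section TriangularArray

open ProbabilityTheory

theorem tendsto_one_add_pow_exp {ι : Type*} {l : Filter ι} {k : ι → ℕ} {z : ι → ℂ} {w : ℂ}
    (hk : Tendsto k l atTop) (hz : Tendsto (fun i => k i * z i) l (𝓝 w)) :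
    Tendsto (fun i => (1 + z i) ^ k i) l (𝓝 (Complex.exp w)) := by
  have hk' : Tendsto (fun i => (k i : ℂ)) l (Bornology.cobounded ℂ) :=
    tendsto_natCast_atTop_cobounded.comp hk
  have hz0 : Tendsto z l (𝓝 0) :=
    tendsto_zero_of_isBoundedUnder_smul_of_tendsto_cobounded (f := fun i => (k i : ℂ))
      (by simpa only [smul_eq_mul] using hz.norm.isBoundedUnder_le) hk'
  have hrem : Tendsto (fun i => k i * (Complex.log (1 + z i) - z i)) l (𝓝 0) := by
    refine ((isBigO_refl (fun i => (k i : ℂ)) l).mul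
      (Complex.log_sub_self_isBigO.comp_tendsto hz0)).trans_tendsto ?_
    simpa [pow_two, mul_assoc] using hz.mul hz0
  have hlog : Tendsto (fun i => k i * Complex.log (1 + z i)) l (𝓝 w) := by
    simpa [mul_sub] using hrem.add hz
  refine hlog.cexp.congr' ?_
  filter_upwards [hz0.eventually_ne (neg_ne_zero.2 one_ne_zero).symm] with i hi
  rw [Complex.exp_nat_mul, Complex.exp_log fun h => hi (eq_neg_of_add_eq_zero_right h)]

theorem norm_cexp_mul_I_sub_le {x : ℝ} (hx : |x| ≤ 1) :
    ‖Complex.exp (x * Complex.I) - (1 + x * Complex.I - x ^ 2 / 2)‖ ≤ |x| ^ 3 := by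
  have hnorm : ‖(x : ℂ) * Complex.I‖ = |x| := by simp
  have hbound := Complex.exp_bound (hnorm.trans_le hx) (n := 3) (by norm_num)
  rw [hnorm] at hbound
  have htaylor : ∑ m ∈ Finset.range 3, ((x : ℂ) * Complex.I) ^ m / (m.factorial : ℂ) =
      1 + x * Complex.I - x ^ 2 / 2 := by
    simp [Finset.sum_range_succ, mul_pow]
    ring
  rw [htaylor] at hbound
  refine hbound.trans (mul_le_of_le_one_right (by positivity) ?_)
  norm_num [Nat.factorial]

variable {Ω : Type*} [MeasurableSpace Ω] {P : Measure Ω} [IsProbabilityMeasure P]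

theorem norm_charFun_map_sub_le {Y : Ω → ℝ} {ε t : ℝ} (hY : AEMeasurable Y P)
    (hε : ∀ᵐ ω ∂P, |Y ω| ≤ ε) (h0 : ∫ ω, Y ω ∂P = 0) (ht : |t| * ε ≤ 1) :
    ‖charFun (P.map Y) t - (1 - t ^ 2 / 2 * variance Y P)‖ ≤ |t| ^ 3 * ε * variance Y P := by
  have hY2 : MemLp Y 2 P := MemLp.of_bound hY.aestronglyMeasurable ε hε
  have hexp : Integrable (fun ω => Complex.exp (t * Y ω * Complex.I)) P :=
    .of_bound (AEMeasurable.aestronglyMeasurable (by fun_prop)) 1 <| ae_of_all _ fun ω => by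
      rw [← Complex.ofReal_mul, Complex.norm_exp_ofReal_mul_I]
  have hlin : Integrable (fun ω => t * Y ω * Complex.I) P :=
    ((hY2.integrable one_le_two).ofReal.const_mul _).mul_const _
  have hsq : Integrable (fun ω => (t ^ 2 / 2 * Y ω ^ 2 : ℂ)) P := by
    have h := (hY2.integrable_sq.const_mul (t ^ 2 / 2)).ofReal (𝕜 := ℂ)
    push_cast at h
    exact h
  have haff : Integrable (fun ω => 1 + t * Y ω * Complex.I) P := (integrable_const 1).add hlin
  have htaylor : Integrable (fun ω => 1 + t * Y ω * Complex.I - t ^ 2 / 2 * Y ω ^ 2) P :=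
    haff.sub hsq
  have hint : ∫ ω, (1 + t * Y ω * Complex.I - t ^ 2 / 2 * Y ω ^ 2 : ℂ) ∂P =
      1 - t ^ 2 / 2 * variance Y P := by
    rw [variance_of_integral_eq_zero hY h0, integral_sub haff hsq,
      integral_add (integrable_const 1) hlin, integral_mul_const, integral_const_mul,
      integral_const_mul, integral_complex_ofReal, h0]
    simp only [← Complex.ofReal_pow, integral_complex_ofReal]
    simp
  rw [charFun_apply_real, integral_map hY (by fun_prop), ← hint, ← integral_sub hexp htaylor,
    variance_of_integral_eq_zero hY h0, ← integral_const_mul]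
  refine norm_integral_le_of_norm_le (hY2.integrable_sq.const_mul _) ?_
  filter_upwards [hε] with ω hω
  have htY : |t * Y ω| ≤ 1 := by
    rw [abs_mul]
    exact (mul_le_mul_of_nonneg_left hω (abs_nonneg t)).trans ht
  calc ‖Complex.exp (t * Y ω * Complex.I) - (1 + t * Y ω * Complex.I - t ^ 2 / 2 * Y ω ^ 2)‖
      = ‖Complex.exp ((t * Y ω : ℝ) * Complex.I) -
          (1 + (t * Y ω : ℝ) * Complex.I - (t * Y ω : ℝ) ^ 2 / 2)‖ := by
        push_cast
        ring_nf
    _ ≤ |t * Y ω| ^ 3 := norm_cexp_mul_I_sub_le htY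
    _ = |t| ^ 3 * |Y ω| * Y ω ^ 2 := by
        rw [abs_mul, ← sq_abs (Y ω)]
        ring
    _ ≤ |t| ^ 3 * ε * Y ω ^ 2 := by gcongr

theorem tendsto_charFun_map_pow {Y : ℕ → Ω → ℝ} {ε : ℕ → ℝ} {k : ℕ → ℕ} {v : NNReal}
    (hY : ∀ n, AEMeasurable (Y n) P) (hYε : ∀ n, ∀ᵐ ω ∂P, |Y n ω| ≤ ε n)
    (hε : Tendsto ε atTop (𝓝 0)) (h0 : ∀ n, ∫ ω, Y n ω ∂P = 0) (hk : Tendsto k atTop atTop)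
    (hv : Tendsto (fun n => k n * variance (Y n) P) atTop (𝓝 v)) (t : ℝ) :
    Tendsto (fun n => charFun (P.map (Y n)) t ^ k n) atTop (𝓝 (charFun (gaussianReal 0 v) t)) := by
  have hrem : Tendsto (fun n => (k n : ℂ) *
      (charFun (P.map (Y n)) t - (1 - t ^ 2 / 2 * variance (Y n) P))) atTop (𝓝 0) := by
    have hlim : Tendsto (fun n => |t| ^ 3 * ε n * (k n * variance (Y n) P)) atTop (𝓝 0) := by
      simpa using (hε.const_mul (|t| ^ 3)).mul hv
    have hsmall : ∀ᶠ n in atTop, |t| * ε n < 1 :=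
      (hε.const_mul |t|).eventually_lt_const (by simp)
    refine squeeze_zero_norm' ?_ hlim
    filter_upwards [hsmall] with n hn
    rw [norm_mul, Complex.norm_natCast, mul_left_comm]
    exact mul_le_mul_of_nonneg_left (norm_charFun_map_sub_le (hY n) (hYε n) (h0 n) hn.le)
      (Nat.cast_nonneg _)
  have hmain : Tendsto (fun n => ((k n * variance (Y n) P : ℝ) : ℂ) * (t ^ 2 / 2)) atTop
      (𝓝 ((v : ℝ) * (t ^ 2 / 2) : ℂ)) :=
    ((Complex.continuous_ofReal.tendsto _).comp hv).mul_const _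
  have hz : Tendsto (fun n => (k n : ℂ) * (charFun (P.map (Y n)) t - 1)) atTop
      (𝓝 (-((v : ℝ) * t ^ 2 / 2) : ℂ)) := by
    convert hrem.sub hmain using 2 <;> push_cast <;> ring
  rw [charFun_gaussianReal]
  simpa using tendsto_one_add_pow_exp hk hz

end TriangularArray

section BlockCount

theorem tendsto_natDiv_mul_div {r : ℕ → ℕ} (hr : Tendsto (fun n => n / r n) atTop atTop) :
    Tendsto (fun n => ((n / r n : ℕ) : ℝ) * r n / n) atTop (𝓝 1) := by
  have hinv : Tendsto (fun n => 1 - ((n / r n : ℕ) : ℝ)⁻¹) atTop (𝓝 1) := by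
    simpa using (tendsto_natCast_atTop_atTop (R := ℝ).comp hr).inv_tendsto_atTop.const_sub 1
  refine tendsto_of_tendsto_of_tendsto_of_le_of_le' hinv tendsto_const_nhds ?_ ?_
  · filter_upwards [hr.eventually_ge_atTop 1, eventually_ge_atTop 1] with n hk hn
    have hn0 : (0 : ℝ) < n := Nat.cast_pos.2 hn
    have hk0 : (0 : ℝ) < (n / r n : ℕ) := Nat.cast_pos.2 hk
    have hr0 : 0 < r n := Nat.pos_of_ne_zero fun h => by simp [h] at hk
    have hle : ((n / r n : ℕ) : ℝ) * r n ≤ n := mod_cast Nat.div_mul_le_self n (r n)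
    have hlt : (n : ℝ) < (n / r n : ℕ) * r n + r n := mod_cast Nat.lt_div_mul_add hr0
    have hr_le : (r n : ℝ) ≤ ((n / r n : ℕ) : ℝ)⁻¹ * n := by
      rwa [inv_mul_eq_div, le_div_iff₀' hk0]
    rw [le_div_iff₀ hn0]
    linarith
  · exact Eventually.of_forall fun n => div_le_one_of_le₀
      (mod_cast Nat.div_mul_le_self n (r n)) n.cast_nonneg

theorem tendsto_natDiv_add_mul_div {p q : ℕ → ℕ}
    (hk : Tendsto (fun n => n / (p n + q n)) atTop atTop)
    (hp : Tendsto (fun n => (p n : ℝ) / ((p n : ℝ) + q n)) atTop (𝓝 1)) :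
    Tendsto (fun n => ((n / (p n + q n) : ℕ) : ℝ) * p n / n) atTop (𝓝 1) := by
  have hlim := (tendsto_natDiv_mul_div hk).mul hp
  rw [mul_one] at hlim
  refine hlim.congr' ?_
  filter_upwards [hk.eventually_ge_atTop 1] with n hn
  have hr0 : (p n : ℝ) + q n ≠ 0 := fun h => by
    have : p n + q n = 0 := mod_cast h
    simp [this] at hn
  push_cast
  field_simp

end BlockCount

section Blocks

open ProbabilityTheory

variable {Ω : Type*} {F : MeasurableSpace Ω} [MeasurableSpace Ω] {P : Measure Ω} {d : ℕ}
  {X : ℕ → Ω → (Fin d → ℝ)} {f : (Fin d → ℝ) → ℝ} {s : Fin d → ℝ} {b : ℝ}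

theorem sum_bigBlock (g : ℕ → ℝ) (p q K : ℕ) :
    ∑ j ∈ Finset.Icc 1 K, ∑ i ∈ bigBlock p q j, g i =
      ∑ j ∈ Finset.range K, ∑ i ∈ Finset.range p, g (i + 1 + j * (p + q)) := by
  have hblock (j : ℕ) : bigBlock p q (j + 1) =
      (Finset.range p).map (addRightEmbedding (1 + j * (p + q))) := by
    ext i
    simp only [bigBlock, Finset.mem_Icc, Finset.mem_map, Finset.mem_range, add_tsub_cancel_right,
      addRightEmbedding_apply]
    exact ⟨fun h => ⟨i - (1 + j * (p + q)), by omega, by omega⟩, by omega⟩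
  rw [← Finset.Ico_add_one_right_eq_Icc, Finset.sum_Ico_eq_sum_range, add_tsub_cancel_right]
  simp only [add_comm 1, hblock, Finset.sum_map, addRightEmbedding_apply, add_assoc]

theorem measurable_blockSum {p o : ℕ}
    (hF : ∀ i < p, Measurable[F] (X (i + 1 + o))) : Measurable[F] (blockSum P X s b p o) :=
  Finset.measurable_fun_sum _ fun i hi =>
    (measurable_kappa.comp (hF i (Finset.mem_range.1 hi))).sub_const _

namespace IsSimplexSample

theorem blockSum_eq_sum_kappa_sub (hX : IsSimplexSample P X f) (p o : ℕ) :
    blockSum P X s b p o = fun ω =>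
      ∑ i : Fin p, (kappa d s b (X (i + 1 + o) ω) - ∫ ω', kappa d s b (X 1 ω') ∂P) := by
  ext ω
  simp only [blockSum, Xi, Finset.sum_range, hX.integral_comp (Nat.le_add_left 1 _ |>.trans
    (Nat.le_add_right _ o)) measurable_kappa, hX.integral_comp le_rfl measurable_kappa]

theorem map_blockSum_eq (hX : IsSimplexSample P X f) (hstat : IsStrictlyStationary P X) (p o : ℕ) :
    P.map (blockSum P X s b p o) = P.map (blockSum P X s b p 0) := by
  set Φ : (Fin p → Fin d → ℝ) → ℝ :=
    fun x => ∑ i, (kappa d s b (x i) - ∫ ω, kappa d s b (X 1 ω) ∂P)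
  have hΦ : Measurable Φ := by fun_prop
  have hmap (o : ℕ) : P.map (blockSum P X s b p o) =
      (P.map fun ω (i : Fin p) => X (i + 1 + o) ω).map Φ := by
    rw [Measure.map_map hΦ (measurable_pi_lambda _ fun i => hX.measurable _),
      hX.blockSum_eq_sum_kappa_sub]
    rfl
  rw [hmap, hmap, hstat o p, hstat 0 p]

variable [IsProbabilityMeasure P]

theorem integral_blockSum (hX : IsSimplexSample P X f) (hs : s ∈ SdInt d) (hb : 0 < b) (p o : ℕ) :
    ∫ ω, blockSum P X s b p o ω ∂P = 0 := by
  have hint (i : ℕ) := (hX.memLp_Xi hs hb i).integrable one_le_two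
  unfold blockSum
  rw [integral_finsetSum _ fun i _ => hint _]
  refine Finset.sum_eq_zero fun i _ => ?_
  unfold Xi
  rw [integral_sub ((hX.memLp_kappa hs hb _).integrable one_le_two) (integrable_const _)]
  simp

theorem abs_blockSum_le (hX : IsSimplexSample P X f) (hs : s ∈ SdInt d) (hb : 0 < b) (p o : ℕ)
    (ω : Ω) : |blockSum P X s b p o ω| ≤ p * kappa d s b s := by
  have hκ0 (i : ℕ) (ω : Ω) := kappa_nonneg hs hb (hX.mem_Sd i ω)
  have hκ1 (i : ℕ) (ω : Ω) := kappa_le_kappa_self hs hb (hX.mem_Sd i ω)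
  have hXi (i : ℕ) : |Xi P X s b i ω| ≤ kappa d s b s := by
    refine abs_sub_le_of_nonneg_of_le (hκ0 i ω) (hκ1 i ω) (integral_nonneg (hκ0 i)) ?_
    simpa using integral_mono ((hX.memLp_kappa hs hb i).integrable one_le_two)
      (integrable_const _) (hκ1 i)
  refine (Finset.abs_sum_le_sum_abs _ _).trans ((Finset.sum_le_card_nsmul _ _ _ fun i _ =>
    hXi _).trans_eq ?_)
  simp

theorem norm_charFun_sum_blockSum_sub_pow_le (hX : IsSimplexSample P X f)
    (hstat : IsStrictlyStationary P X) {p : ℕ} (hp : 1 ≤ p) (q K : ℕ) (t : ℝ) :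
    ‖charFun (P.map fun ω => ∑ j ∈ Finset.range K, blockSum P X s b p (j * (p + q)) ω) t -
        charFun (P.map (blockSum P X s b p 0)) t ^ K‖ ≤ K * (8 * alphaMix P X (q + 1)) := by
  set Y : ℕ → Ω → ℝ := fun j => blockSum P X s b p (j * (p + q))
  have hY (j : ℕ) : Measurable (Y j) := measurable_blockSum fun i _ => hX.measurable _
  have hpast (i j : ℕ) (hij : i < j) : Measurable[pastAlgebra X ((j - 1) * (p + q) + p)] (Y i) := by
    have hle : i * (p + q) ≤ (j - 1) * (p + q) := Nat.mul_le_mul_right _ (by omega)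
    refine measurable_blockSum fun l hl => measurable_pastAlgebra ?_ ?_ <;> omega
  have hfuture (j : ℕ) : Measurable[futureAlgebra X (j * (p + q) + 1)] (Y j) :=
    measurable_blockSum fun l _ => measurable_futureAlgebra (by omega)
  have hmix (j : ℕ) (hj : 0 < j) : IsAlphaMixing (pastAlgebra X ((j - 1) * (p + q) + p))
      (futureAlgebra X (j * (p + q) + 1)) P (alphaMix P X (q + 1)) := by
    obtain ⟨j, rfl⟩ := Nat.exists_eq_succ_of_ne_zero hj.ne'
    have hgap : j * (p + q) + p + (q + 1) = j.succ * (p + q) + 1 := by rw [Nat.succ_mul]; ring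
    exact hgap ▸ isAlphaMixing_alphaMix (by dsimp only [Nat.succ_sub_one]; omega) (q + 1)
  have hexp (F : MeasurableSpace Ω) {Z : Ω → ℝ} (hZ : Measurable[F] Z) :
      StronglyMeasurable[F] fun ω => Complex.exp (t * Z ω * Complex.I) :=
    Measurable.stronglyMeasurable (by fun_prop)
  have hdep := norm_integral_prod_sub_prod_integral_le (alphaMix_nonneg (q + 1))
    (fun j => pastAlgebra_le hX.measurable _) (fun j => futureAlgebra_le hX.measurable _) hmix
    (fun j ω => (by rw [← Complex.ofReal_mul, Complex.norm_exp_ofReal_mul_I] :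
      ‖Complex.exp (t * Y j ω * Complex.I)‖ = 1).le)
    (fun i j hij => hexp _ (hpast i j hij)) (fun j => hexp _ (hfuture j)) K
  have hchar (Z : Ω → ℝ) (hZ : Measurable Z) :
      charFun (P.map Z) t = ∫ ω, Complex.exp (t * Z ω * Complex.I) ∂P := by
    rw [charFun_apply_real, integral_map hZ.aemeasurable (by fun_prop)]
  simp only [← hchar _ (hY _), Y, hX.map_blockSum_eq hstat p (_ * _), Finset.prod_const,
    Finset.card_range] at hdep
  rw [hchar _ (Finset.measurable_fun_sum _ fun j _ => hY j)]
  simpa only [Complex.ofReal_sum, Finset.mul_sum, Finset.sum_mul, Complex.exp_sum] using hdep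

end IsSimplexSample

end Blocks

section BigBlockCLT

open ProbabilityTheory

/-- The normalization `n^{-1/2} b^{d/4}` of the big-block sum. -/
noncomputable def cltScale (d n : ℕ) (b : ℝ) : ℝ :=
  (n : ℝ) ^ (-(1 : ℝ) / 2) * b ^ ((d : ℝ) / 4)

theorem cltScale_nonneg (d n : ℕ) {b : ℝ} (hb : 0 ≤ b) : 0 ≤ cltScale d n b :=
  mul_nonneg (rpow_nonneg n.cast_nonneg _) (rpow_nonneg hb _)

theorem cltScale_sq (d n : ℕ) {b : ℝ} (hb : 0 ≤ b) :
    cltScale d n b ^ 2 = (n : ℝ)⁻¹ * b ^ ((d : ℝ) / 2) := by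
  rw [cltScale, mul_pow, ← rpow_natCast, ← rpow_natCast, ← rpow_mul n.cast_nonneg, ← rpow_mul hb,
    ← rpow_neg_one]
  congr 2 <;> push_cast <;> ring

theorem cltScale_mul_mul (d n : ℕ) {b : ℝ} (hb : 0 < b) (x y : ℝ) :
    cltScale d n b * (x * y) =
      x / ((n : ℝ) ^ ((1 : ℝ) / 2) * b ^ ((d : ℝ) / 4)) * (b ^ ((d : ℝ) / 2) * y) := by
  have hn : (n : ℝ) ^ (-(1 : ℝ) / 2) = ((n : ℝ) ^ ((1 : ℝ) / 2))⁻¹ := by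
    rw [← rpow_neg n.cast_nonneg, neg_div]
  have hb2 : b ^ ((d : ℝ) / 2) = b ^ ((d : ℝ) / 4) * b ^ ((d : ℝ) / 4) := by
    rw [← rpow_add hb]
    ring_nf
  rw [cltScale, hn, hb2]
  field_simp

theorem tendsto_integral_boundedContinuous_of_tendsto_charFun {Ω : Type*} [MeasurableSpace Ω]
    {P : Measure Ω} [IsProbabilityMeasure P] {S : ℕ → Ω → ℝ} {μ : Measure ℝ}
    [IsProbabilityMeasure μ] (hS : ∀ n, AEMeasurable (S n) P)
    (h : ∀ t, Tendsto (fun n => charFun (P.map (S n)) t) atTop (𝓝 (charFun μ t)))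
    (g : BoundedContinuousFunction ℝ ℝ) :
    Tendsto (fun n => ∫ ω, g (S n ω) ∂P) atTop (𝓝 (∫ x, g x ∂μ)) := by
  let ν (n : ℕ) : ProbabilityMeasure ℝ := ⟨P.map (S n), Measure.isProbabilityMeasure_map (hS n)⟩
  have hν : Tendsto ν atTop (𝓝 ⟨μ, inferInstance⟩) :=
    ProbabilityMeasure.tendsto_iff_tendsto_charFun.2 h
  refine (ProbabilityMeasure.tendsto_iff_forall_integral_tendsto.1 hν g).congr fun n => ?_
  exact integral_map (hS n) g.continuous.aestronglyMeasurable

variable {Ω : Type*} [MeasurableSpace Ω] {P : Measure Ω} [IsProbabilityMeasure P] {d : ℕ}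
  {X : ℕ → Ω → (Fin d → ℝ)} {f : (Fin d → ℝ) → ℝ} {s : Fin d → ℝ} {b : ℕ → ℝ} {M p ν : ℝ}
  {pn qn kn : ℕ → ℕ}

namespace IsSimplexSample

theorem tendsto_mul_variance_cltScale_mul_blockSum (hX : IsSimplexSample P X f) (hd : 1 ≤ d)
    (hs : s ∈ SdInt d) (hM : ∀ x ∈ Sd d, |f x| ≤ M) (hfs : ContinuousWithinAt f (Sd d) s)
    (hp : 2 < p) (hA2 : AssumpA2 P X f p) (hν : 2 * (p - 1) / (p - 2) < ν)
    (hα : (fun m : ℕ => alphaMix P X m) =O[atTop] fun m : ℕ => (m : ℝ) ^ (-ν))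
    (hb0 : ∀ n, 0 < b n) (hb : Tendsto b atTop (𝓝 0))
    (hk : Tendsto (fun n => (kn n : ℝ) * pn n / n) atTop (𝓝 1)) :
    Tendsto (fun n => kn n *
        variance (fun ω => cltScale d n (b n) * blockSum P X s (b n) (pn n) 0 ω) P)
      atTop (𝓝 (psiFun d s * f s).toNNReal) := by
  obtain ⟨r, hr, hvar⟩ :=
    hX.exists_tendsto_zero_abs_variance_blockSum_sub_le hd hs hM hfs hp hA2 hν hα
  have hv : ((psiFun d s * f s).toNNReal : ℝ) = psiFun d s * max (f s) 0 := by
    rw [coe_toNNReal', mul_max_of_nonneg _ _ (psiFun_nonneg hs), mul_zero]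
  rw [hv]
  set v := psiFun d s * max (f s) 0
  have hrb : Tendsto (fun n => (kn n : ℝ) * pn n / n * r (b n)) atTop (𝓝 0) := by
    simpa using hk.mul (hr.comp (tendsto_nhdsWithin_iff.2 ⟨hb, .of_forall hb0⟩))
  have herr : Tendsto (fun n => kn n * (n : ℝ)⁻¹ *
      (b n ^ ((d : ℝ) / 2) * variance (blockSum P X s (b n) (pn n) 0) P - pn n * v))
      atTop (𝓝 0) := by
    refine squeeze_zero_norm (fun n => ?_) hrb
    have hkn : (0 : ℝ) ≤ kn n * (n : ℝ)⁻¹ := by positivity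
    rw [norm_mul, norm_of_nonneg hkn]
    exact (mul_le_mul_of_nonneg_left (hvar (b n) (hb0 n) (pn n) 0) hkn).trans_eq (by ring)
  have hsum := herr.add (hk.mul_const v)
  rw [zero_add, one_mul] at hsum
  refine hsum.congr fun n => ?_
  rw [variance_const_mul, cltScale_sq d n (hb0 n).le]
  ring

theorem tendsto_charFun_map_blockSum_pow (hX : IsSimplexSample P X f) (hs : s ∈ SdInt d)
    (hb0 : ∀ n, 0 < b n) (hb : Tendsto b atTop (𝓝 0)) (hk : Tendsto kn atTop atTop)
    (hpn : Tendsto (fun n : ℕ =>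
      (pn n : ℝ) / ((n : ℝ) ^ ((1 : ℝ) / 2) * b n ^ ((d : ℝ) / 4))) atTop (𝓝 0))
    {v : NNReal} (hv : Tendsto (fun n => kn n *
        variance (fun ω => cltScale d n (b n) * blockSum P X s (b n) (pn n) 0 ω) P) atTop (𝓝 v))
    (t : ℝ) :
    Tendsto (fun n => charFun (P.map (blockSum P X s (b n) (pn n) 0))
      (cltScale d n (b n) * t) ^ kn n) atTop (𝓝 (charFun (gaussianReal 0 v) t)) := by
  have hmeas (n : ℕ) : Measurable (blockSum P X s (b n) (pn n) 0) :=
    measurable_blockSum fun i _ => hX.measurable _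
  have hsmall : Tendsto (fun n => cltScale d n (b n) * (pn n * kappa d s (b n) s))
      atTop (𝓝 0) := by
    have hpeak := (tendsto_rpow_mul_kappa_self hs).comp
      (tendsto_nhdsWithin_iff.2 ⟨hb, .of_forall hb0⟩)
    have hprod := hpn.mul hpeak
    rw [zero_mul] at hprod
    exact hprod.congr fun n => (cltScale_mul_mul d n (hb0 n) _ _).symm
  refine (tendsto_charFun_map_pow (fun n => ((hmeas n).const_mul _).aemeasurable)
    (fun n => ae_of_all _ fun ω => ?_) hsmall (fun n => ?_) hk hv t).congr fun n => ?_
  · rw [abs_mul, abs_of_nonneg (cltScale_nonneg d n (hb0 n).le)]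
    exact mul_le_mul_of_nonneg_left (hX.abs_blockSum_le hs (hb0 n) _ _ ω)
      (cltScale_nonneg d n (hb0 n).le)
  · rw [integral_const_mul, hX.integral_blockSum hs (hb0 n), mul_zero]
  · rw [charFun_map_mul_comp (hmeas n).aemeasurable]

theorem tendsto_charFun_sum_blockSum_sub_pow (hX : IsSimplexSample P X f)
    (hstat : IsStrictlyStationary P X) (hν : 0 ≤ ν)
    (hα : (fun m : ℕ => alphaMix P X m) =O[atTop] fun m : ℕ => (m : ℝ) ^ (-ν))
    (hpn : Tendsto pn atTop atTop) (hqn : Tendsto qn atTop atTop)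
    (hkq : Tendsto (fun n => (kn n : ℝ) / (qn n : ℝ) ^ ν) atTop (𝓝 0)) (t : ℕ → ℝ) :
    Tendsto (fun n =>
        charFun (P.map fun ω => ∑ j ∈ Finset.range (kn n),
          blockSum P X s (b n) (pn n) (j * (pn n + qn n)) ω) (t n) -
        charFun (P.map (blockSum P X s (b n) (pn n) 0)) (t n) ^ kn n) atTop (𝓝 0) := by
  obtain ⟨C, hC, hαC⟩ := exists_alphaMix_le_mul_rpow hα
  have hlim : Tendsto (fun n => 8 * C * ((kn n : ℝ) / (qn n : ℝ) ^ ν)) atTop (𝓝 0) := by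
    simpa using hkq.const_mul (8 * C)
  refine squeeze_zero_norm' ?_ hlim
  filter_upwards [hpn.eventually_ge_atTop 1, hqn.eventually_ge_atTop 1] with n hpn hqn
  have hq0 : (0 : ℝ) < qn n := Nat.cast_pos.2 hqn
  have hmix : alphaMix P X (qn n + 1) ≤ C * ((qn n : ℝ) ^ ν)⁻¹ := by
    refine (hαC _ (Nat.le_add_left 1 _)).trans (mul_le_mul_of_nonneg_left ?_ hC.le)
    rw [← rpow_neg hq0.le]
    exact rpow_le_rpow_of_nonpos hq0 (by push_cast; linarith) (neg_nonpos.2 hν)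
  calc _ ≤ (kn n : ℝ) * (8 * alphaMix P X (qn n + 1)) :=
        hX.norm_charFun_sum_blockSum_sub_pow_le hstat hpn _ _ _
    _ ≤ kn n * (8 * (C * ((qn n : ℝ) ^ ν)⁻¹)) := by gcongr
    _ = 8 * C * ((kn n : ℝ) / (qn n : ℝ) ^ ν) := by rw [div_eq_mul_inv]; ring

end IsSimplexSample

theorem big_block_sum_clt_general (hX : IsSimplexSample P X f) (hd : 1 ≤ d)
    (hstat : IsStrictlyStationary P X) (hM : ∀ x ∈ Sd d, |f x| ≤ M)
    (hs : s ∈ SdInt d) (hfs : ContinuousWithinAt f (Sd d) s)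
    (hp : 2 < p) (hA2 : AssumpA2 P X f p) (hν : 2 * (p - 1) / (p - 2) < ν)
    (hα : (fun m : ℕ => alphaMix P X m) =O[atTop] fun m : ℕ => (m : ℝ) ^ (-ν))
    (hb0 : ∀ n, 0 < b n) (hb : Tendsto b atTop (𝓝 0))
    (hpn : Tendsto pn atTop atTop) (hqn : Tendsto qn atTop atTop)
    (hkn : Tendsto (fun n => n / (pn n + qn n)) atTop atTop)
    (hpq : Tendsto (fun n => (pn n : ℝ) / ((pn n : ℝ) + qn n)) atTop (𝓝 1))
    (hkq : Tendsto (fun n => ((n / (pn n + qn n) : ℕ) : ℝ) / (qn n : ℝ) ^ ν) atTop (𝓝 0))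
    (hpb : Tendsto (fun n : ℕ =>
      (pn n : ℝ) / ((n : ℝ) ^ ((1 : ℝ) / 2) * b n ^ ((d : ℝ) / 4))) atTop (𝓝 0))
    (g : BoundedContinuousFunction ℝ ℝ) :
    Tendsto (fun n : ℕ => ∫ ω, g ((n : ℝ) ^ (-(1 : ℝ) / 2) * b n ^ ((d : ℝ) / 4) *
        ∑ j ∈ Finset.Icc 1 (n / (pn n + qn n)),
          ∑ i ∈ bigBlock (pn n) (qn n) j, Xi P X s (b n) i ω) ∂P)
      atTop (𝓝 (∫ x, g x ∂gaussianReal 0 (psiFun d s * f s).toNNReal)) := by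
  have hν0 : 0 ≤ ν := (div_nonneg (by linarith) (by linarith)).trans hν.le
  have hvar := hX.tendsto_mul_variance_cltScale_mul_blockSum hd hs hM hfs hp hA2 hν hα hb0 hb
    (tendsto_natDiv_add_mul_div hkn hpq)
  set S : ℕ → Ω → ℝ := fun n ω => ∑ j ∈ Finset.range (n / (pn n + qn n)),
    blockSum P X s (b n) (pn n) (j * (pn n + qn n)) ω
  have hS (n : ℕ) : Measurable (S n) :=
    Finset.measurable_fun_sum _ fun j _ => measurable_blockSum fun i _ => hX.measurable _
  have hclt := tendsto_integral_boundedContinuous_of_tendsto_charFun (P := P)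
    (S := fun n ω => cltScale d n (b n) * S n ω) (μ := gaussianReal 0 (psiFun d s * f s).toNNReal)
    (fun n => ((hS n).const_mul _).aemeasurable) (fun t => ?_) g
  · simp only [sum_bigBlock]
    exact hclt
  have hdep := hX.tendsto_charFun_sum_blockSum_sub_pow (s := s) (b := b) hstat hν0 hα hpn hqn hkq
    fun n => cltScale d n (b n) * t
  have hindep := hX.tendsto_charFun_map_blockSum_pow hs hb0 hb hkn hpb hvar t
  simp only [charFun_map_mul_comp (hS _).aemeasurable]
  simpa only [sub_add_cancel, zero_add] using hdep.add hindep

end BigBlockCLT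

/-- CLT for the big-block sum `S_{1,n}`. -/
theorem big_block_sum_clt {Ω : Type*} [MeasurableSpace Ω]
    (P : Measure Ω) [IsProbabilityMeasure P] (d : ℕ) (hd : 1 ≤ d)
    (X : ℕ → Ω → (Fin d → ℝ)) (hmeas : ∀ i, Measurable (X i))
    (hval : ∀ i ω, X i ω ∈ Sd d)
    (hstat : IsStrictlyStationary P X)
    (f : (Fin d → ℝ) → ℝ)
    (hlaw : ∀ i : ℕ, 1 ≤ i →
      Measure.map (X i) P = volume.withDensity fun x => ENNReal.ofReal (f x))
    (hsupp : ∀ x, x ∉ Sd d → f x = 0)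
    -- (A2)
    (p : ℝ) (hp : 2 < p) (hA2 : AssumpA2 P X f p)
    -- (A3) with ν > max{2(p-1)/(p-2), (d+4)/2}
    (ν : ℝ) (hν : 2 * (p - 1) / (p - 2) < ν) (hν' : ((d : ℝ) + 4) / 2 < ν)
    (hA3 : (fun m : ℕ => alphaMix P X m) =O[atTop] fun m : ℕ => (m : ℝ) ^ (-ν))
    -- (A4)
    (hA4 : ∃ L : NNReal, LipschitzOnWith L f (Sd d))
    -- (A5)
    (b : ℕ → ℝ) (hbpos : ∀ n, 0 < b n)
    (hA5a : Tendsto b atTop (𝓝 0))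
    (hA5b : Tendsto (fun n : ℕ => (n : ℝ) * (b n) ^ ((d : ℝ) / 2)) atTop atTop)
    (hA5c : Tendsto (fun n : ℕ => (n : ℝ) ^ ((1 : ℝ) / 2) * (b n) ^ ((d : ℝ) / 4 + 1 / 2))
      atTop (𝓝 0))
    (s : Fin d → ℝ) (hs : s ∈ SdInt d)
    -- blocking sequences
    (pn qn : ℕ → ℕ) (hpn : Tendsto pn atTop atTop) (hqn : Tendsto qn atTop atTop)
    (hkn : Tendsto (fun n : ℕ => n / (pn n + qn n)) atTop atTop)
    -- (a) k_n q_n / n → 0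
    (ha : Tendsto (fun n : ℕ => ((n / (pn n + qn n) : ℕ) : ℝ) * (qn n : ℝ) / (n : ℝ))
      atTop (𝓝 0))
    -- (b) p_n/(p_n+q_n) → 1
    (hb' : Tendsto (fun n : ℕ => (pn n : ℝ) / ((pn n : ℝ) + (qn n : ℝ))) atTop (𝓝 1))
    -- (c) k_n q_n² n⁻¹ b^{-d/2} / (p_n+q_n)^ν → 0
    (hc : Tendsto (fun n : ℕ => ((n / (pn n + qn n) : ℕ) : ℝ) * (qn n : ℝ) ^ 2 *
        (n : ℝ)⁻¹ * (b n) ^ (-(d : ℝ) / 2) / ((pn n : ℝ) + (qn n : ℝ)) ^ ν)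
      atTop (𝓝 0))
    -- (d) k_n / q_n^ν → 0
    (hd' : Tendsto (fun n : ℕ => ((n / (pn n + qn n) : ℕ) : ℝ) / (qn n : ℝ) ^ ν)
      atTop (𝓝 0))
    -- (e) p_n / (n^{1/2} b^{d/4}) → 0
    (he : Tendsto (fun n : ℕ =>
        (pn n : ℝ) / ((n : ℝ) ^ ((1 : ℝ) / 2) * (b n) ^ ((d : ℝ) / 4))) atTop (𝓝 0)) :
    ∀ g : BoundedContinuousFunction ℝ ℝ,
      Tendsto (fun n : ℕ =>
          ∫ ω, g ((n : ℝ) ^ (-(1 : ℝ) / 2) * (b n) ^ ((d : ℝ) / 4) *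
            ∑ j ∈ Finset.Icc 1 (n / (pn n + qn n)),
              ∑ i ∈ bigBlock (pn n) (qn n) j, Xi P X s (b n) i ω) ∂P)
        atTop
        (𝓝 (∫ x, g x ∂(ProbabilityTheory.gaussianReal 0
          (Real.toNNReal (psiFun d s * f s))))) := by
  obtain ⟨L, hL⟩ := hA4
  obtain ⟨M, hM⟩ := isCompact_Sd.exists_bound_of_continuousOn hL.continuousOn
  exact big_block_sum_clt_general
    (.of_continuousOn hmeas hval hlaw hsupp hL.continuousOn) hd hstat hM hs
    (hL.continuousOn s (SdInt_subset_Sd hs)) hp hA2 hν hA3 hbpos hA5a hpn hqn hkn hb' hd' he
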